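/- arXiv:2003.01967 — 2 statements merged into one kernel-verified Lean document; each statement's English description precedes it below -/
import Mathlib

section
/- Let e ≥ 2 be an integer, e′ = e/(e−1), I ⊆ ℝ a bounded open interval, and A > 0, C₀ > 0. Suppose b ∈ C^{e−1,1}(Ī, ℂ) satisfies ‖b′‖_{L^∞(I)} ≤ C₀ |I|^{−1} A^{e} and Lip_I(b^{(e−1)}) ≤ C₀ |I|^{−e} A^{e}. Then every continuous function b̂ : I → ℂ with b̂^{e} = b is absolutely continuous and for every 1 ≤ p < e′ satisfies the normalized bound |I|^{−1/p} ‖b̂′‖_{L^p(I)} ≤ C |I|^{−1} A, where C depends only on e, p, and C₀. -/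
/-!
The derivative of a continuous root satisfies `|b̂'| = |b'| / (e |b|^(1 - 1/e))` off the zeros of
`b̂`, and almost everywhere on the zeros it vanishes, since a zero with nonzero derivative is
isolated. As `|b|` dominates `|Re b|` and `|Im b|`, while `|b'| ≤ |Re b'| + |Im b'|`, it is enough to
bound the `L^p`-norm of `|g'| / |g|^(1 - 1/n)` for a real function `g` of class `C^{n-1,1}`, with
`n = e`. Division by `C₀ A^e / |I|^e` normalizes the hypotheses to `Lip g^(n-1) ≤ 1` and
`|g'| ≤ |I|^(n-1)`.

The real estimate (`root_lintegral`) is local. Around a point `s` with `g'(s) ≠ 0` consider the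
scale `H = max_{i<n} |g^(i)(s)|^(1/(n-i))` and an interval of radius `r`, a small multiple of `H`
or the length of the whole interval if that is smaller. By Taylor's formula the derivative that
realizes the maximum is almost constant there, so by iterated Rolle the lower derivatives have
boundedly many zeros. Let `Z` be the finite set of all these zeros and the endpoints. Descending from
the almost constant derivative to `g` gives `|g'| ≤ C |g| / dist(·, Z)` (`doubling`,
`local_structure`). Together with `|g'| ≤ C r^(n-1)` this yields
`(|g'| / |g|^(1-1/n))^p ≤ C (r / dist(·, Z))^θ` where `θ = p (1 - 1/n)`. The condition `p < e'` says
exactly `θ < 1`, hence the integral over the local interval is at most a constant times `r`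
(`local_lintegral`). A Vitali family of disjoint intervals adds these up to a constant times `|I|`.

For absolute continuity, the bound shows that `b̂'` is integrable. On an interval without zeros of
`b̂` the fundamental theorem of calculus applies, and on any other interval the first and the last
zero split off a part over which the increment of `b̂` is `0`; thus `|b̂(y) - b̂(x)| ≤ ∫_x^y |b̂'|`
always, and the absolute continuity of the integral concludes.
-/

open MeasureTheory Set
open scoped ENNReal NNReal

noncomputable section

/-- The Lipschitz seminorm (best Lipschitz constant) of `f` on `s`. -/
def lipConstOn {E : Type*} [NormedAddCommGroup E] (f : ℝ → E) (s : Set ℝ) : ℝ :=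
  sInf {C : ℝ | 0 ≤ C ∧ ∀ x ∈ s, ∀ y ∈ s, ‖f x - f y‖ ≤ C * |x - y|}

/-- `f` is of class `C^{k,1}` on `s`: it is `C^k` and the `k`-th derivative is Lipschitz. -/
def CkLipOn {E : Type*} [NormedAddCommGroup E] [NormedSpace ℝ E] (k : ℕ) (f : ℝ → E)
    (s : Set ℝ) : Prop :=
  ContDiffOn ℝ k f s ∧ ∃ C : ℝ, 0 ≤ C ∧ ∀ x ∈ s, ∀ y ∈ s,
    ‖iteratedDerivWithin k f s x - iteratedDerivWithin k f s y‖ ≤ C * |x - y|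

/-- The `C^{k,1}` norm of `f` on `s`:
`max_{j ≤ k} sup_s ‖f^{(j)}‖ + Lip_s (f^{(k)})`. -/
def ckLipNorm {E : Type*} [NormedAddCommGroup E] [NormedSpace ℝ E] (k : ℕ) (f : ℝ → E)
    (s : Set ℝ) : ℝ :=
  (⨆ j : Fin (k + 1), ⨆ x : s, ‖iteratedDerivWithin (j : ℕ) f s (x : ℝ)‖) +
    lipConstOn (iteratedDerivWithin k f s) s

/-- Absolute continuity of `f` on a set `s ⊆ ℝ`. -/
def AbsolutelyContinuousOn {E : Type*} [NormedAddCommGroup E] (f : ℝ → E) (s : Set ℝ) : Prop :=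
  ∀ ε > (0 : ℝ), ∃ δ > (0 : ℝ), ∀ (m : ℕ) (a b : Fin m → ℝ),
    (∀ i, a i ≤ b i) → (∀ i, Set.Icc (a i) (b i) ⊆ s) →
    (Pairwise fun i j => Set.Ioo (a i) (b i) ∩ Set.Ioo (a j) (b j) = ∅) →
    (∑ i, (b i - a i)) < δ → (∑ i, ‖f (b i) - f (a i)‖) < ε

/-- The polynomial map `V = ℂ^N → ℂ^n` associated with a family of polynomials. -/
def polyMap {N n : ℕ} (σ : Fin n → MvPolynomial (Fin N) ℂ) (v : Fin N → ℂ) : Fin n → ℂ :=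
  fun j => MvPolynomial.eval v (σ j)

/-- `σ` is a system of basic invariants for the representation `ρ` of `G` on `ℂ^N`:
each `σ j` is `G`-invariant, and every `G`-invariant polynomial lies in the subalgebra
generated by the `σ j`. -/
def IsBasicInvariantSystem {G : Type*} [Group G] {N n : ℕ}
    (ρ : Representation ℂ G (Fin N → ℂ)) (σ : Fin n → MvPolynomial (Fin N) ℂ) : Prop :=
  (∀ j g v, MvPolynomial.eval (ρ g v) (σ j) = MvPolynomial.eval v (σ j)) ∧
  (∀ q : MvPolynomial (Fin N) ℂ,
    (∀ g v, MvPolynomial.eval (ρ g v) q = MvPolynomial.eval v q) →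
      q ∈ Algebra.adjoin ℂ (Set.range σ))

/-! ### Zeros and logarithmic derivatives along a chain of derivatives -/

/-- `G 0, G 1, …, G j` is a chain of successive derivatives on `[u, v]`, one-sided at the
endpoints. -/
def DerivChain (j : ℕ) (G : ℕ → ℝ → ℝ) (u v : ℝ) : Prop :=
  ∀ i < j, ∀ t ∈ Icc u v, HasDerivWithinAt (G i) (G (i + 1) t) (Icc u v) t

lemma DerivChain.mono {j k : ℕ} {G : ℕ → ℝ → ℝ} {u v u' v' : ℝ} (h : DerivChain j G u v)
    (hk : k ≤ j) (hs : Icc u' v' ⊆ Icc u v) : DerivChain k G u' v' :=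
  fun i hi t ht => (h i (by omega) t (hs ht)).mono hs

lemma DerivChain.shift {j : ℕ} {G : ℕ → ℝ → ℝ} {u v : ℝ} (h : DerivChain (j + 1) G u v) :
    DerivChain j (fun i => G (i + 1)) u v :=
  fun i hi t ht => h (i + 1) (by omega) t ht

lemma DerivChain.continuousOn {j : ℕ} {G : ℕ → ℝ → ℝ} {u v : ℝ} (h : DerivChain j G u v)
    {i : ℕ} (hi : i < j) : ContinuousOn (G i) (Icc u v) :=
  fun t ht => (h i hi t ht).continuousWithinAt

lemma exists_slope_Ioo {f f' : ℝ → ℝ} {u v x y : ℝ}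
    (h : ∀ t ∈ Icc u v, HasDerivWithinAt f (f' t) (Icc u v) t)
    (hx : x ∈ Icc u v) (hy : y ∈ Icc u v) (hxy : x < y) :
    ∃ c ∈ Ioo x y, f y - f x = f' c * (y - x) := by
  have hsub : Icc x y ⊆ Icc u v := Icc_subset_Icc hx.1 hy.2
  obtain ⟨c, hc, hc'⟩ := exists_hasDerivAt_eq_slope f f' hxy
    (fun t ht => ((h t (hsub ht)).mono hsub).continuousWithinAt)
    (fun t ht => (h t (hsub (Ioo_subset_Icc_self ht))).hasDerivAt
      (Icc_mem_nhds (hx.1.trans_lt ht.1) (ht.2.trans_le hy.2)))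
  refine ⟨c, hc, ?_⟩
  have : y - x ≠ 0 := by linarith
  rw [hc']; field_simp

/-- The mean value theorem for two points in either order; the intermediate point lies no farther
from `x` than `y` does. -/
lemma exists_slope {f f' : ℝ → ℝ} {u v x y : ℝ}
    (h : ∀ t ∈ Icc u v, HasDerivWithinAt f (f' t) (Icc u v) t)
    (hx : x ∈ Icc u v) (hy : y ∈ Icc u v) :
    ∃ c ∈ Icc u v, |c - x| ≤ |y - x| ∧ f y - f x = f' c * (y - x) := by
  rcases lt_trichotomy x y with hxy | hxy | hxy
  · obtain ⟨c, hc, h'⟩ := exists_slope_Ioo h hx hy hxy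
    refine ⟨c, ⟨hx.1.trans hc.1.le, hc.2.le.trans hy.2⟩, ?_, h'⟩
    rw [abs_of_nonneg (by linarith [hc.1]), abs_of_nonneg (by linarith)]; linarith [hc.2]
  · subst hxy; exact ⟨x, hx, le_rfl, by simp⟩
  · obtain ⟨c, hc, h'⟩ := exists_slope_Ioo h hy hx hxy
    refine ⟨c, ⟨hy.1.trans hc.1.le, hc.2.le.trans hx.2⟩, ?_, by linarith⟩
    rw [abs_of_nonpos (by linarith [hc.2]), abs_of_nonpos (by linarith)]; linarith [hc.1]

/-- Iterated Rolle: a function whose `j`-th derivative has no zero has at most `j` zeros. -/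
lemma zeros_finite (j : ℕ) : ∀ (G : ℕ → ℝ → ℝ) (u v : ℝ), DerivChain j G u v →
    (∀ t ∈ Icc u v, G j t ≠ 0) →
    ∃ Z : Finset ℝ, Z.card ≤ j ∧ ∀ t, t ∈ Z ↔ t ∈ Icc u v ∧ G 0 t = 0 := by
  induction j with
  | zero =>
    intro G u v _ h0
    exact ⟨∅, le_rfl, fun t => by simpa using fun h1 h2 => h0 t ⟨h1, h2⟩⟩
  | succ j ih =>
    intro G u v hG h0
    obtain ⟨Z, hZc, hZ⟩ := ih (fun i => G (i + 1)) u v hG.shift h0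
    have key : ∀ s : Finset ℝ, (∀ t ∈ s, t ∈ Icc u v ∧ G 0 t = 0) → s.card ≤ j + 1 := by
      intro s hs
      refine (Finset.card_le_of_interleaved (t := Z) ?_).trans (by omega)
      intro x hx y hy hxy _
      obtain ⟨c, hc, h'⟩ := exists_slope_Ioo (hG 0 (by omega)) (hs x hx).1 (hs y hy).1 hxy
      rw [(hs x hx).2, (hs y hy).2, sub_self, eq_comm, mul_eq_zero] at h'
      refine ⟨c, (hZ c).2 ⟨⟨(hs x hx).1.1.trans hc.1.le, hc.2.le.trans (hs y hy).1.2⟩, ?_⟩,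
        hc.1, hc.2⟩
      exact h'.resolve_right (by linarith)
    have hfin : {t | t ∈ Icc u v ∧ G 0 t = 0}.Finite := by
      by_contra hinf
      obtain ⟨s, hs, hc⟩ := Set.Infinite.exists_subset_card_eq hinf (j + 2)
      have := key s (fun t ht => hs ht)
      omega
    refine ⟨hfin.toFinset, key _ (fun t ht => by simpa using ht), fun t => by simp⟩

/-- If `f'` varies by at most half its size on the ball of radius `κ d` about `t`, and `f` has no
zero within distance `d` of `t`, then `|f t|` is at least of size `d |f' t|`: otherwise walking the
distance `κ d` in the direction in which `|f|` decreases would reach a zero. -/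
lemma logDeriv_step {f f' : ℝ → ℝ} {u v t d κ : ℝ}
    (h : ∀ t ∈ Icc u v, HasDerivWithinAt f (f' t) (Icc u v) t) (ht : t ∈ Icc u v)
    (hd : 0 < d) (hκ : 0 < κ) (hκ1 : κ ≤ 1) (hdu : d ≤ |t - u|) (hdv : d ≤ |t - v|)
    (hz : ∀ z ∈ Icc u v, f z = 0 → d ≤ |t - z|)
    (hf' : ∀ s, |s - t| ≤ κ * d → |f' s - f' t| ≤ 1 / 2 * |f' t|) :
    d * |f' t| ≤ 2 / κ * |f t| := by
  by_contra! hcon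
  have hft : f t ≠ 0 := by
    intro h0
    have := hz t ht h0
    simp at this; linarith
  rw [abs_of_nonneg (by linarith [ht.1])] at hdu
  rw [abs_of_nonpos (by linarith [ht.2])] at hdv
  have hκd : 0 < κ * d := by positivity
  have hκd1 : κ * d ≤ d := by nlinarith
  have hcon' : |f t| < 1 / 2 * (κ * d) * |f' t| := by
    rw [div_mul_eq_mul_div, div_lt_iff₀ hκ] at hcon
    linarith
  obtain ⟨σ, hσ1, hσ⟩ : ∃ σ : ℝ, |σ| = 1 ∧ σ * (f t * f' t) = |f t| * |f' t| := by
    rw [← abs_mul]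
    rcases le_total 0 (f t * f' t) with h0 | h0
    · exact ⟨1, by simp, by rw [abs_of_nonneg h0, one_mul]⟩
    · exact ⟨-1, by simp, by rw [abs_of_nonpos h0]; ring⟩
  -- `σ` is the sign of `f t * f' t`, so moving from `t` to `s` makes `|f|` decrease.
  set s := t - σ * (κ * d) with hs
  have hst : |s - t| = κ * d := by
    rw [hs, show t - σ * (κ * d) - t = -(σ * (κ * d)) by ring, abs_neg, abs_mul, hσ1, one_mul,
      abs_of_pos hκd]
  have hsm : s ∈ Icc u v := by
    have := abs_le.1 hst.le
    constructor <;> linarith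
  obtain ⟨c, hc, hct, hslope⟩ := exists_slope h ht hsm
  have hc2 := hf' c (hct.trans hst.le)
  have hneg : f s * f t < 0 := by
    have e1 : f s * f t = f t ^ 2 - (σ * (f t * f' c)) * (κ * d) := by
      have : f s = f t + f' c * (s - t) := by linarith
      rw [this, hs]; ring
    have e2 : σ * (f t * f' c) = |f t| * |f' t| + σ * f t * (f' c - f' t) := by
      rw [← hσ]; ring
    have e3 : |σ * f t * (f' c - f' t)| ≤ |f t| * (1 / 2 * |f' t|) := by
      rw [abs_mul, abs_mul, hσ1, one_mul]; gcongr
    have e4 := (abs_le.1 e3).1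
    have e5 : 0 < |f t| := abs_pos.2 hft
    have e6 : |f t| * |f t| = f t ^ 2 := by rw [← sq, sq_abs]
    have e7 : |f t| * (1 / 2 * |f' t|) * (κ * d) ≤ (σ * (f t * f' c)) * (κ * d) := by
      rw [e2]; gcongr; linarith
    have e8 : |f t| * |f t| < |f t| * (1 / 2 * (κ * d) * |f' t|) := by gcongr
    rw [e1]
    nlinarith
  have hsub : uIcc s t ⊆ Icc u v := ordConnected_Icc.uIcc_subset hsm ht
  have hcont : ContinuousOn f (uIcc s t) :=
    fun x hx => ((h x (hsub hx)).mono hsub).continuousWithinAt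
  have h0 : (0 : ℝ) ∈ uIcc (f s) (f t) := by
    rw [mem_uIcc]
    rcases mul_neg_iff.1 hneg with ⟨a, b⟩ | ⟨a, b⟩
    · right; exact ⟨b.le, a.le⟩
    · left; exact ⟨a.le, b.le⟩
  obtain ⟨z, hzm, hz0⟩ := intermediate_value_uIcc hcont h0
  have hd1 := hz z (hsub hzm) hz0
  have hzt : |t - z| ≤ |t - s| := by
    have := Set.abs_sub_left_of_mem_uIcc (Set.uIcc_comm s t ▸ hzm)
    rw [abs_sub_comm t z, abs_sub_comm t s]
    exact this
  have hzs : z ≠ s := by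
    rintro rfl
    rw [hz0] at hneg; simp at hneg
  have : |t - z| < d := by
    rw [abs_sub_comm t s, hst] at hzt
    refine lt_of_le_of_ne (hzt.trans hκd1) fun heq => hzs ?_
    -- equality would force `z` to be the far endpoint of the segment
    have hd' : |t - z| = |s - t| := by linarith
    rcases mem_uIcc.1 hzm with ⟨a, b⟩ | ⟨a, b⟩
    · rw [abs_of_nonneg (by linarith), abs_of_nonpos (by linarith)] at hd'; linarith
    · rw [abs_of_nonpos (by linarith), abs_of_nonneg (by linarith)] at hd'; linarith
  linarith

/-- If the `j`-th derivative has no zero on `[u, v]` and varies by at most half its size, then away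
from a finite set `Z` (the endpoints and the zeros of `G₀, …, G_{j-1}`) the function `G₀` varies by
at most half its size on balls of radius comparable to the distance to `Z`, and (for `j > 0`) its
logarithmic derivative is at most of order `1 / dist(·, Z)`. The first property for `G₁` yields both
properties for `G₀`, through `logDeriv_step`. -/
lemma doubling (j : ℕ) : ∀ (G : ℕ → ℝ → ℝ) (u v : ℝ), u ≤ v → DerivChain j G u v →
    (∀ t ∈ Icc u v, G j t ≠ 0) →
    (∀ t ∈ Icc u v, ∀ s ∈ Icc u v, |G j s - G j t| ≤ 1 / 2 * |G j t|) →
    ∃ Z : Finset ℝ, Z.card ≤ 2 + j * j ∧ (∀ z ∈ Z, z ∈ Icc u v) ∧ u ∈ Z ∧ v ∈ Z ∧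
      (0 < j → ∀ t ∈ Icc u v, ∀ d, 0 < d → (∀ z ∈ Z, d ≤ |t - z|) →
        d * |G 1 t| ≤ 2 * 6 ^ j * |G 0 t|) ∧
      ∀ t ∈ Icc u v, ∀ d, 0 < d → (∀ z ∈ Z, d ≤ |t - z|) → ∀ s, |s - t| ≤ (1 / 6) ^ j * d →
        |G 0 s - G 0 t| ≤ 1 / 2 * |G 0 t| := by
  induction j with
  | zero =>
    intro G u v huv _ _ hvar
    refine ⟨{u, v}, Finset.card_le_two, by simp [huv], by simp, by simp, by simp, ?_⟩
    intro t ht d hd hZ s hs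
    refine hvar t ht s ?_
    have h1 := hZ u (by simp)
    have h2 := hZ v (by simp)
    rw [abs_of_nonneg (by linarith [ht.1])] at h1
    rw [abs_of_nonpos (by linarith [ht.2])] at h2
    rw [pow_zero, one_mul, abs_le] at hs
    constructor <;> linarith
  | succ j ih =>
    intro G u v huv hG h0 hvar
    obtain ⟨Z, hZc, hZs, hZu, hZv, -, hZ⟩ := ih (fun i => G (i + 1)) u v huv hG.shift h0 hvar
    obtain ⟨Y, hYc, hY⟩ := zeros_finite (j + 1) G u v hG h0
    have hκ : (0 : ℝ) < (1 / 6) ^ j := by positivity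
    have hκ1 : ((1 : ℝ) / 6) ^ j ≤ 1 := pow_le_one₀ (by norm_num) (by norm_num)
    have hlog : ∀ t ∈ Icc u v, ∀ d, 0 < d → (∀ z ∈ Z ∪ Y, d ≤ |t - z|) →
        d * |G 1 t| ≤ 2 / (1 / 6) ^ j * |G 0 t| := by
      intro t ht d hd hd'
      refine logDeriv_step (hG 0 (by omega)) ht hd hκ hκ1 (hd' u (by simp [hZu]))
        (hd' v (by simp [hZv])) (fun z hz hz0 => hd' z ?_) ?_
      · exact Finset.mem_union_right _ ((hY z).2 ⟨hz, hz0⟩)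
      · exact hZ t ht d hd fun z hz => hd' z (Finset.mem_union_left _ hz)
    refine ⟨Z ∪ Y, ?_, ?_, by simp [hZu], by simp [hZv], ?_, ?_⟩
    · refine (Finset.card_union_le _ _).trans ?_
      nlinarith
    · intro z hz
      rcases Finset.mem_union.1 hz with h | h
      · exact hZs z h
      · exact ((hY z).1 h).1
    · intro _ t ht d hd hd'
      refine (hlog t ht d hd hd').trans ?_
      gcongr
      rw [one_div, inv_pow, div_inv_eq_mul]
      gcongr <;> norm_num
    · intro t ht d hd hd' s hs
      have hsm : s ∈ Icc u v := by
        have h1 := hd' u (by simp [hZu])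
        have h2 := hd' v (by simp [hZv])
        rw [abs_of_nonneg (by linarith [ht.1])] at h1
        rw [abs_of_nonpos (by linarith [ht.2])] at h2
        have h3 : ((1 : ℝ) / 6) ^ (j + 1) ≤ 1 := pow_le_one₀ (by norm_num) (by norm_num)
        have h4 := abs_le.1 (hs.trans (mul_le_of_le_one_left hd.le h3))
        constructor <;> linarith
      obtain ⟨c, hc, hct, hslope⟩ := exists_slope (hG 0 (by omega)) ht hsm
      have hs6 : |s - t| ≤ 1 / 6 * ((1 / 6) ^ j * d) := by rw [pow_succ] at hs; linarith
      have hc1 : |G 1 c - G 1 t| ≤ 1 / 2 * |G 1 t| := by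
        refine hZ t ht d hd (fun z hz => hd' z (Finset.mem_union_left _ hz)) c ?_
        have : 0 ≤ (1 / 6 : ℝ) ^ j * d := by positivity
        linarith
      have hc2 : |G 1 c| ≤ 3 / 2 * |G 1 t| := by
        have := abs_add_le (G 1 c - G 1 t) (G 1 t)
        rw [sub_add_cancel] at this; linarith
      rw [hslope, abs_mul]
      have hl := hlog t ht d hd hd'
      calc |G 1 c| * |s - t| ≤ 3 / 2 * |G 1 t| * (1 / 6 * ((1 / 6) ^ j * d)) := by gcongr
        _ = (1 / 6) ^ j / 4 * (d * |G 1 t|) := by ring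
        _ ≤ (1 / 6) ^ j / 4 * (2 / (1 / 6) ^ j * |G 0 t|) := by gcongr
        _ = 1 / 2 * |G 0 t| := by field_simp; ring

/-! ### The natural length scale -/

/-- The natural length scale of `a₀, …, a_{n-1}`: the largest of the numbers `aᵢ ^ (1 / (n - i))`. -/
lemma exists_scale (n : ℕ) (a : ℕ → ℝ) (ha : ∀ i, 0 ≤ a i) {k : ℕ} (hk : k < n) (hak : 0 < a k) :
    ∃ H : ℝ, 0 < H ∧ (∀ i < n, a i ≤ H ^ (n - i)) ∧ ∃ j < n, a j = H ^ (n - j) := by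
  have hpow : ∀ i < n, (a i ^ (((n - i : ℕ) : ℝ)⁻¹)) ^ (n - i) = a i := fun i hi =>
    Real.rpow_inv_natCast_pow (ha i) (by omega)
  obtain ⟨j, hj, hmax⟩ := Finset.exists_max_image (Finset.range n)
    (fun i => a i ^ (((n - i : ℕ) : ℝ)⁻¹)) ⟨k, Finset.mem_range.2 hk⟩
  rw [Finset.mem_range] at hj
  refine ⟨_, ?_, fun i hi => ?_, j, hj, (hpow j hj).symm⟩
  · exact (Real.rpow_pos_of_pos hak _).trans_le (hmax k (Finset.mem_range.2 hk))
  · conv_lhs => rw [← hpow i hi]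
    exact pow_le_pow_left₀ (Real.rpow_nonneg (ha i) _) (hmax i (Finset.mem_range.2 hi)) _

/-- Taylor bounds at scale `H`, obtained by descending through the derivatives. -/
lemma taylor_scale {n : ℕ} {G : ℕ → ℝ → ℝ} {u v s H : ℝ} (hH : 0 < H)
    (hG : DerivChain (n - 1) G u v)
    (hL : ∀ x ∈ Icc u v, ∀ y ∈ Icc u v, |G (n - 1) x - G (n - 1) y| ≤ |x - y|)
    (hs : s ∈ Icc u v) (hi : ∀ i < n, |G i s| ≤ H ^ (n - i)) (k : ℕ) :
    k < n → ∀ t ∈ Icc u v, |t - s| ≤ H →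
      |G (n - 1 - k) t - G (n - 1 - k) s| ≤ (k + 1 : ℕ) * H ^ k * |t - s| := by
  induction k with
  | zero => intro _ t ht _; simpa using hL t ht s hs
  | succ k ih =>
    intro hk t ht hts
    obtain ⟨c, hc, hcs, hslope⟩ := exists_slope (hG (n - 1 - (k + 1)) (by omega)) hs ht
    rw [show n - 1 - (k + 1) + 1 = n - 1 - k by omega] at hslope
    rw [hslope, abs_mul]
    have h1 := ih (by omega) c hc (hcs.trans hts)
    have h2 := hi (n - 1 - k) (by omega)
    rw [show n - (n - 1 - k) = k + 1 by omega] at h2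
    have h3 := abs_add_le (G (n - 1 - k) c - G (n - 1 - k) s) (G (n - 1 - k) s)
    rw [sub_add_cancel] at h3
    have h4 : ((k + 1 : ℕ) : ℝ) * H ^ k * |c - s| ≤ (k + 1 : ℕ) * H ^ k * H := by
      gcongr; exact hcs.trans hts
    gcongr
    calc _ ≤ ((k + 1 : ℕ) : ℝ) * H ^ k * H + H ^ (k + 1) := by linarith
      _ = _ := by push_cast; ring

/-- Around every point where `G₁ ≠ 0` there is an interval of some radius `r` on which the local
situation is that of a non-degenerate polynomial: `|G₁| ≲ r ^ (n - 1)`, and `|G₁| ≲ |G₀| / dist(·, Z)`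
for a finite set `Z` of controlled size. The radius is a small multiple of the length scale
`H = maxᵢ |Gᵢ s| ^ (1 / (n - i))`, truncated at the length of the whole interval. -/
lemma local_structure {n : ℕ} (hn : 2 ≤ n) {G : ℕ → ℝ → ℝ} {α β s : ℝ} (hαβ : α < β)
    (hG : DerivChain (n - 1) G α β)
    (hL : ∀ x ∈ Icc α β, ∀ y ∈ Icc α β, |G (n - 1) x - G (n - 1) y| ≤ |x - y|)
    (h1 : ∀ t ∈ Icc α β, |G 1 t| ≤ (β - α) ^ (n - 1)) (hs : s ∈ Icc α β) (hs1 : G 1 s ≠ 0) :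
    ∃ r, 0 < r ∧ r ≤ β - α ∧ ∃ Z : Finset ℝ, Z.card ≤ 2 + n * n ∧ Z.Nonempty ∧
      (∀ z ∈ Z, z ∈ Icc α β ∩ Icc (s - r) (s + r)) ∧
      ∀ t ∈ Icc α β ∩ Icc (s - r) (s + r),
        |G 1 t| ≤ ((n + 1) * (5 * n) ^ (n - 1) : ℝ) * r ^ (n - 1) ∧
        ∀ d, 0 < d → (∀ z ∈ Z, d ≤ |t - z|) →
          d * |G 1 t| ≤ (2 * 6 ^ n + 2 * ((n + 1) * (5 * n) ^ (n - 1)) : ℝ) * |G 0 t| := by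
  obtain ⟨H, hH, hHi, j, hjn, hj⟩ := exists_scale n (fun i => |G i s|) (fun i => abs_nonneg _)
    (k := 1) (by omega) (abs_pos.2 hs1)
  have hn0 : (2 : ℝ) ≤ n := by exact_mod_cast hn
  have hn5 : (0 : ℝ) < 5 * n := by positivity
  set r := min (H / (5 * n)) (β - α) with hr
  have hr0 : 0 < r := lt_min (by positivity) (by linarith)
  have hrH : r ≤ H / (5 * n) := min_le_left _ _
  have hrH1 : r ≤ H := hrH.trans (div_le_self hH.le (by linarith))
  refine ⟨r, hr0, min_le_right _ _, ?_⟩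
  have hab : ∀ t, t ∈ Icc (s - r) (s + r) → |t - s| ≤ r := fun t ht =>
    abs_le.2 ⟨by linarith [ht.1], by linarith [ht.2]⟩
  -- Since `r ≤ H / (5 n)`, all derivatives keep their size at scale `H` on the interval; the one of
  -- index `j`, which realizes the maximum defining `H`, stays comparable to its value at `s`.
  have htay : ∀ i < n, ∀ t ∈ Icc α β ∩ Icc (s - r) (s + r),
      |G i t - G i s| ≤ n * H ^ (n - 1 - i) * |t - s| := by
    intro i hi t ht
    have := taylor_scale hH hG hL hs hHi (n - 1 - i) (by omega) t ht.1 ((hab t ht.2).trans hrH1)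
    rw [show n - 1 - (n - 1 - i) = i by omega] at this
    refine this.trans ?_
    gcongr
    omega
  have hG1 : ∀ t ∈ Icc α β ∩ Icc (s - r) (s + r),
      |G 1 t| ≤ ((n + 1) * (5 * n) ^ (n - 1) : ℝ) * r ^ (n - 1) := by
    intro t ht
    rcases min_choice (H / (5 * n)) (β - α) with h | h
    · rw [← hr] at h
      have e1 := htay 1 (by omega) t ht
      have e2 := hHi 1 (by omega)
      have e3 := abs_add_le (G 1 t - G 1 s) (G 1 s)
      rw [sub_add_cancel] at e3
      have e4 : (n : ℝ) * H ^ (n - 1 - 1) * |t - s| ≤ n * H ^ (n - 1 - 1) * H := by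
        gcongr; exact (hab t ht.2).trans hrH1
      have e5 : H ^ (n - 1 - 1) * H = H ^ (n - 1) := by
        rw [← pow_succ]; congr 1; omega
      have e6 : (5 * n) ^ (n - 1) * r ^ (n - 1) = H ^ (n - 1) := by
        rw [← mul_pow, h]; congr 1; field_simp
      rw [mul_assoc, e6]
      rw [mul_assoc (n : ℝ) _ H, e5] at e4
      linarith
    · rw [← hr] at h
      refine (h1 t ht.1).trans ?_
      rw [← h]
      refine le_mul_of_one_le_left (by positivity) ?_
      have : (1 : ℝ) ≤ (5 * n) ^ (n - 1) := one_le_pow₀ (by linarith)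
      nlinarith
  have hvar : ∀ t ∈ Icc α β ∩ Icc (s - r) (s + r), |G j t - G j s| ≤ 1 / 5 * |G j s| := by
    intro t ht
    refine (htay j hjn t ht).trans ?_
    have : |G j s| = H ^ (n - j) := hj
    rw [this]
    calc (n : ℝ) * H ^ (n - 1 - j) * |t - s| ≤ n * H ^ (n - 1 - j) * (H / (5 * n)) := by
          gcongr; exact (hab t ht.2).trans hrH
      _ = 1 / 5 * (H ^ (n - 1 - j) * H) := by field_simp
      _ = _ := by rw [← pow_succ]; congr 2; omega
  have hjs : 0 < |G j s| := by
    have : |G j s| = H ^ (n - j) := hj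
    rw [this]; positivity
  have hlow : ∀ t ∈ Icc α β ∩ Icc (s - r) (s + r), 4 / 5 * |G j s| ≤ |G j t| := by
    intro t ht
    have h1 := hvar t ht
    have h2 := abs_sub_abs_le_abs_sub (G j s) (G j t)
    rw [abs_sub_comm] at h2
    linarith
  have hI : Icc α β ∩ Icc (s - r) (s + r) = Icc (max α (s - r)) (min β (s + r)) := Icc_inter_Icc
  have hsub : Icc (max α (s - r)) (min β (s + r)) ⊆ Icc α β := hI ▸ inter_subset_left
  have hle : max α (s - r) ≤ min β (s + r) :=
    max_le (le_min hαβ.le (by linarith [hs.1])) (le_min (by linarith [hs.2]) (by linarith))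
  obtain ⟨Z, hZc, hZs, hZu, -, hZ, -⟩ := doubling j G _ _ hle (hG.mono (by omega) hsub)
    (fun t ht => by
      have := hlow t (hI ▸ ht)
      exact abs_pos.1 (by linarith))
    (fun t ht s' hs' => by
      have e1 := hvar t (hI ▸ ht)
      have e2 := hvar s' (hI ▸ hs')
      have e3 := hlow t (hI ▸ ht)
      have e4 := abs_sub_le (G j s') (G j s) (G j t)
      rw [abs_sub_comm (G j s) (G j t)] at e4
      linarith)
  refine ⟨Z, hZc.trans (by nlinarith), ⟨_, hZu⟩, fun z hz => hI ▸ hZs z hz, fun t ht => ⟨hG1 t ht, ?_⟩⟩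
  intro d hd hdZ
  -- For `j = 0` the function `G₀` itself is of size `H ^ n` on the interval, and the bound on `G₁`
  -- suffices; for `j > 0` the bound is the one in `doubling`.
  rcases Nat.eq_zero_or_pos j with hj0 | hj0
  · subst hj0
    have e1 : d ≤ 2 * r := by
      have hm := hI ▸ hZs _ hZu
      refine (hdZ _ hZu).trans (abs_le.2 ⟨?_, ?_⟩) <;> linarith [ht.2.1, ht.2.2, hm.2.1, hm.2.2]
    have e2 : r * r ^ (n - 1) ≤ |G 0 t| := by
      refine le_trans ?_ (hlow t ht)
      have : |G 0 s| = H ^ (n - 0) := hj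
      rw [this, ← pow_succ', Nat.sub_zero, show n - 1 + 1 = n by omega]
      have e3 : 2 * r ≤ H := by
        have := (le_div_iff₀ hn5).1 hrH
        nlinarith
      have e4 : (2 * r) ^ n ≤ H ^ n := by gcongr
      have e5 : (2 : ℝ) ^ 1 ≤ 2 ^ n := pow_le_pow_right₀ (by norm_num) (by omega)
      have e6 : 0 < r ^ n := by positivity
      rw [mul_pow] at e4
      nlinarith
    have e7 := hG1 t ht
    set K : ℝ := (n + 1) * (5 * n) ^ (n - 1)
    have hK : 0 ≤ K := by positivity
    calc d * |G 1 t| ≤ (2 * r) * (K * r ^ (n - 1)) := by gcongr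
      _ = 2 * K * (r * r ^ (n - 1)) := by ring
      _ ≤ 2 * K * |G 0 t| := by gcongr
      _ ≤ (2 * 6 ^ n + 2 * K) * |G 0 t| := by
          gcongr; linarith [show (0 : ℝ) ≤ 2 * 6 ^ n by positivity]
  · refine (hZ hj0 t (hI ▸ ht) d hd hdZ).trans ?_
    gcongr
    have e1 : (6 : ℝ) ^ j ≤ 6 ^ n := pow_le_pow_right₀ (by norm_num) hjn.le
    have e2 : (0 : ℝ) ≤ 2 * ((n + 1) * (5 * n) ^ (n - 1)) := by positivity
    linarith

/-! ### Integrating the singularities -/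

/-- The quotient `|y| / |x| ^ (1 - 1 / n)`, which up to the factor `n` is the size of the derivative
of an `n`-th root of a function with value `x` and derivative `y`. It takes values in `ℝ≥0∞`, so it
is `0` for `x = y = 0` and `∞` for `x = 0 ≠ y`. -/
def rootSpeed (n : ℕ) (x y : ℝ) : ℝ≥0∞ :=
  ENNReal.ofReal |y| / ENNReal.ofReal (|x| ^ (1 - 1 / (n : ℝ)))

lemma rootSpeed_zero (n : ℕ) (x : ℝ) : rootSpeed n x 0 = 0 := by simp [rootSpeed]

/-- Interpolation `|y| = |y| ^ (1 / n) * |y| ^ (1 - 1 / n)`: the first factor is controlled by the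
size `M` of `y`, the second by the bound for the logarithmic derivative. -/
lemma rootSpeed_rpow_le {n : ℕ} (hn : 2 ≤ n) {p x y d C M : ℝ} (hp : 0 < p) (hd : 0 < d)
    (hC : 0 ≤ C) (hM : 0 ≤ M) (hxy : d * |y| ≤ C * |x|) (hyM : |y| ≤ M) :
    rootSpeed n x y ^ p ≤
      ENNReal.ofReal (M ^ (p / n) * C ^ (p * (1 - 1 / n)) * d ^ (-(p * (1 - 1 / n : ℝ)))) := by
  have hn0 : (2 : ℝ) ≤ n := by exact_mod_cast hn
  have ha : 0 < 1 - 1 / (n : ℝ) := by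
    rw [sub_pos, div_lt_one (by linarith)]; linarith
  by_cases hx : x = 0
  · have : y = 0 := by
      rw [hx] at hxy
      simp only [abs_zero, mul_zero] at hxy
      exact abs_eq_zero.1 (le_antisymm (by nlinarith [abs_nonneg y]) (abs_nonneg y))
    rw [this, rootSpeed_zero, ENNReal.zero_rpow_of_pos hp]
    exact bot_le
  have hx' : 0 < |x| := abs_pos.2 hx
  set a := 1 - 1 / (n : ℝ)
  rw [rootSpeed, ← ENNReal.ofReal_div_of_pos (Real.rpow_pos_of_pos hx' _),
    ENNReal.ofReal_rpow_of_nonneg (by positivity) hp.le]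
  apply ENNReal.ofReal_le_ofReal
  have h1 : |y| / |x| ^ a ≤ M ^ (1 / (n : ℝ)) * C ^ a * d ^ (-a) := by
    rw [div_le_iff₀ (Real.rpow_pos_of_pos hx' _)]
    have e1 : |y| = |y| ^ (1 / (n : ℝ)) * |y| ^ a := by
      rw [← Real.rpow_add_of_nonneg (abs_nonneg y) (by positivity) ha.le]
      simp [a]
    have e2 : |y| ≤ C * |x| / d := by rw [le_div_iff₀ hd]; linarith
    calc |y| = |y| ^ (1 / (n : ℝ)) * |y| ^ a := e1
      _ ≤ M ^ (1 / (n : ℝ)) * (C * |x| / d) ^ a := by gcongr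
      _ = _ := by
        rw [Real.div_rpow (by positivity) hd.le, Real.mul_rpow hC hx'.le, Real.rpow_neg hd.le]
        ring
  calc (|y| / |x| ^ a) ^ p ≤ (M ^ (1 / (n : ℝ)) * C ^ a * d ^ (-a)) ^ p := by gcongr
    _ = _ := by
      rw [Real.mul_rpow (by positivity) (by positivity), Real.mul_rpow (by positivity) (by positivity),
        ← Real.rpow_mul hM, ← Real.rpow_mul hC, ← Real.rpow_mul hd.le]
      congr 3 <;> ring

lemma lintegral_singular_half {θ ρ : ℝ} (hθ1 : θ < 1) (hρ : 0 ≤ ρ) :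
    ∫⁻ t in Ioc 0 ρ, ENNReal.ofReal (t ^ (-θ)) = ENNReal.ofReal (ρ ^ (1 - θ) / (1 - θ)) := by
  have hint : IntegrableOn (fun t : ℝ => t ^ (-θ)) (Ioc 0 ρ) :=
    (intervalIntegrable_iff_integrableOn_Ioc_of_le hρ).1
      (intervalIntegral.intervalIntegrable_rpow' (by linarith))
  rw [← ofReal_integral_eq_lintegral_ofReal hint]
  · rw [← intervalIntegral.integral_of_le hρ, integral_rpow (Or.inl (by linarith)),
      show -θ + 1 = 1 - θ by ring, Real.zero_rpow (by linarith), sub_zero]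
  · filter_upwards [ae_restrict_mem measurableSet_Ioc] with t ht
    exact Real.rpow_nonneg ht.1.le _

lemma lintegral_singular {θ ρ : ℝ} (hθ1 : θ < 1) (hρ : 0 ≤ ρ) (z : ℝ) :
    ∫⁻ t in Icc (z - ρ) (z + ρ), ENNReal.ofReal (|t - z| ^ (-θ)) ≤
      ENNReal.ofReal (2 * (ρ ^ (1 - θ) / (1 - θ))) := by
  have h0 : ∫⁻ t in Icc (z - ρ) (z + ρ), ENNReal.ofReal (|t - z| ^ (-θ)) =
      ∫⁻ x in Icc (-ρ) ρ, ENNReal.ofReal (|x| ^ (-θ)) := by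
    have := (measurePreserving_sub_right (volume : Measure ℝ) z).setLIntegral_comp_preimage_emb
      (MeasurableEquiv.subRight z).measurableEmbedding
      (fun x => ENNReal.ofReal (|x| ^ (-θ))) (Icc (-ρ) ρ)
    rw [← this]
    congr 2
    ext t
    simp only [mem_Icc, mem_preimage]
    constructor <;> rintro ⟨a, b⟩ <;> constructor <;> linarith
  have h1 : ∫⁻ x in Ioc 0 ρ, ENNReal.ofReal (|x| ^ (-θ)) =
      ENNReal.ofReal (ρ ^ (1 - θ) / (1 - θ)) := by
    rw [← lintegral_singular_half hθ1 hρ]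
    refine setLIntegral_congr_fun measurableSet_Ioc fun t ht => ?_
    simp only [abs_of_pos ht.1]
  have h2 : ∫⁻ x in Ico (-ρ) 0, ENNReal.ofReal (|x| ^ (-θ)) =
      ENNReal.ofReal (ρ ^ (1 - θ) / (1 - θ)) := by
    rw [← h1]
    have := (Measure.measurePreserving_neg (volume : Measure ℝ)).setLIntegral_comp_preimage_emb
      (MeasurableEquiv.neg ℝ).measurableEmbedding
      (fun x => ENNReal.ofReal (|x| ^ (-θ))) (Ioc 0 ρ)
    rw [← this]
    simp
  have hsub : Icc (-ρ) ρ ⊆ (Ico (-ρ) 0 ∪ Ioc 0 ρ) ∪ {0} := by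
    intro x hx
    rcases lt_trichotomy x 0 with h | h | h
    · exact Or.inl (Or.inl ⟨hx.1, h⟩)
    · exact Or.inr h
    · exact Or.inl (Or.inr ⟨h, hx.2⟩)
  have hc : 0 ≤ ρ ^ (1 - θ) / (1 - θ) := div_nonneg (Real.rpow_nonneg hρ _) (by linarith)
  rw [h0]
  refine (lintegral_mono_set hsub).trans ((lintegral_union_le _ _ _).trans ?_)
  rw [setLIntegral_measure_zero {0} _ (by simp), add_zero]
  refine (lintegral_union_le _ _ _).trans ?_
  rw [h1, h2, ← ENNReal.ofReal_add hc hc, two_mul]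

/-- The estimate on one interval: `|g'| ≲ r ^ (n - 1)` and `|g'| ≲ |g| / dist(·, Z)` bound the
integrand by a constant times `∑_{z ∈ Z} (r / |t - z|) ^ θ` with `θ = p (1 - 1 / n) < 1`, and the
integral of this over an interval of length comparable to `r` is comparable to `r`. -/
lemma local_lintegral {n : ℕ} (hn : 2 ≤ n) {p : ℝ} (hp : 0 < p) (hθ1 : p * (1 - 1 / n : ℝ) < 1)
    {N : ℕ} {C₁ C₂ : ℝ} (hC₁ : 0 ≤ C₁) (hC₂ : 0 ≤ C₂) {g g' : ℝ → ℝ} {S : Set ℝ}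
    {s r : ℝ} (hr : 0 < r) (hS : MeasurableSet S) (hSr : S ⊆ Icc (s - r) (s + r))
    (Z : Finset ℝ) (hZN : Z.card ≤ N) (hZne : Z.Nonempty) (hZS : ∀ z ∈ Z, z ∈ S)
    (h : ∀ t ∈ S, |g' t| ≤ C₁ * r ^ (n - 1) ∧
      ∀ d, 0 < d → (∀ z ∈ Z, d ≤ |t - z|) → d * |g' t| ≤ C₂ * |g t|) :
    ∫⁻ t in S, rootSpeed n (g t) (g' t) ^ p ≤
      ENNReal.ofReal (N * (C₁ ^ (p / n) * C₂ ^ (p * (1 - 1 / n : ℝ)) *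
        (4 / (1 - p * (1 - 1 / n : ℝ)))) * r) := by
  have hn0 : (2 : ℝ) ≤ n := by exact_mod_cast hn
  have ha : 0 < 1 - 1 / (n : ℝ) := by
    rw [sub_pos, div_lt_one (by linarith)]; linarith
  set θ : ℝ := p * (1 - 1 / n : ℝ) with hθ
  have hθ0 : 0 ≤ θ := by positivity
  set K : ℝ := (C₁ * r ^ (n - 1)) ^ (p / n) * C₂ ^ θ with hK
  have hK0 : 0 ≤ K := by positivity
  have hpt : ∀ t ∈ S, t ∉ (Z : Set ℝ) → rootSpeed n (g t) (g' t) ^ p ≤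
      ∑ z ∈ Z, ENNReal.ofReal K * ENNReal.ofReal (|t - z| ^ (-θ)) := by
    intro t ht htZ
    obtain ⟨z, hz, hmin⟩ := Finset.exists_min_image Z (fun z => |t - z|) hZne
    have hd : 0 < |t - z| := abs_pos.2 (sub_ne_zero.2 fun h => htZ (h ▸ hz))
    refine (rootSpeed_rpow_le hn hp hd hC₂ (by positivity)
      ((h t ht).2 _ hd hmin) (h t ht).1).trans ?_
    refine le_trans ?_ (Finset.single_le_sum
      (f := fun z => ENNReal.ofReal K * ENNReal.ofReal (|t - z| ^ (-θ)))
      (fun _ _ => bot_le) hz)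
    rw [ENNReal.ofReal_mul hK0]
  have hae : ∀ᵐ t ∂(volume.restrict S), rootSpeed n (g t) (g' t) ^ p ≤
      ∑ z ∈ Z, ENNReal.ofReal K * ENNReal.ofReal (|t - z| ^ (-θ)) := by
    have h1 : ∀ᵐ t ∂(volume.restrict S), t ∉ (Z : Set ℝ) :=
      ae_restrict_of_ae (measure_eq_zero_iff_ae_notMem.1 (Z.finite_toSet.measure_zero volume))
    filter_upwards [h1, ae_restrict_mem hS] with t ht htS using hpt t htS ht
  refine (lintegral_mono_ae hae).trans ?_
  rw [lintegral_finsetSum _ (fun z _ => by fun_prop)]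
  have hz : ∀ z ∈ Z, ∫⁻ t in S, ENNReal.ofReal K * ENNReal.ofReal (|t - z| ^ (-θ)) ≤
      ENNReal.ofReal (K * (2 * ((2 * r) ^ (1 - θ) / (1 - θ)))) := by
    intro z hz
    rw [lintegral_const_mul _ (by fun_prop), ENNReal.ofReal_mul hK0]
    gcongr
    refine (lintegral_mono_set ?_).trans (lintegral_singular hθ1 (by positivity) z)
    intro t ht
    have h1 := hSr ht
    have h2 := hSr (hZS z hz)
    constructor <;> linarith [h1.1, h1.2, h2.1, h2.2]
  refine (Finset.sum_le_sum hz).trans ?_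
  rw [Finset.sum_const, nsmul_eq_mul, ← ENNReal.ofReal_natCast, ← ENNReal.ofReal_mul (by positivity)]
  apply ENNReal.ofReal_le_ofReal
  have h1θ : 0 < 1 - θ := by linarith
  have hKr : K = C₁ ^ (p / n) * C₂ ^ θ * r ^ θ := by
    rw [hK, Real.mul_rpow hC₁ (by positivity), ← Real.rpow_natCast r (n - 1), ← Real.rpow_mul hr.le]
    have : ((n - 1 : ℕ) : ℝ) * (p / n) = θ := by
      rw [hθ, Nat.cast_sub (by omega)]; field_simp; simp
    rw [this]; ring
  have h2r : (2 * r) ^ (1 - θ) ≤ 2 * r ^ (1 - θ) := by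
    rw [Real.mul_rpow (by norm_num) hr.le]
    gcongr
    calc (2 : ℝ) ^ (1 - θ) ≤ 2 ^ (1 : ℝ) := Real.rpow_le_rpow_of_exponent_le (by norm_num) (by linarith)
      _ = 2 := by norm_num
  have hrr : r ^ θ * r ^ (1 - θ) = r := by
    rw [← Real.rpow_add hr]; simp
  calc (Z.card : ℝ) * (K * (2 * ((2 * r) ^ (1 - θ) / (1 - θ))))
      ≤ N * (K * (2 * ((2 * r ^ (1 - θ)) / (1 - θ)))) := by gcongr
    _ = N * (C₁ ^ (p / n) * C₂ ^ θ * (4 / (1 - θ))) * (r ^ θ * r ^ (1 - θ)) := by rw [hKr]; ring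
    _ = _ := by rw [hrr]

/-! ### Summation over a covering -/

/-- The normalized estimate for one real function: the local estimates are summed over a Vitali
family, whose disjoint balls have total length at most `3 (β - α)`. -/
lemma root_lintegral {n : ℕ} (hn : 2 ≤ n) {p : ℝ} (hp : 0 < p) (hθ1 : p * (1 - 1 / n : ℝ) < 1) :
    ∃ C : ℝ, 0 < C ∧ ∀ (G : ℕ → ℝ → ℝ) (α β : ℝ), α < β → DerivChain (n - 1) G α β →
      (∀ x ∈ Icc α β, ∀ y ∈ Icc α β, |G (n - 1) x - G (n - 1) y| ≤ |x - y|) →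
      (∀ t ∈ Icc α β, |G 1 t| ≤ (β - α) ^ (n - 1)) →
      ∫⁻ t in Icc α β, rootSpeed n (G 0 t) (G 1 t) ^ p ≤ ENNReal.ofReal (C * (β - α)) := by
  set C₁ : ℝ := (n + 1) * (5 * n) ^ (n - 1)
  set C₂ : ℝ := 2 * 6 ^ n + 2 * C₁
  have hC₁ : 0 ≤ C₁ := by positivity
  have hC₂ : 0 ≤ C₂ := by positivity
  set K : ℝ := (2 + n * n : ℕ) * (C₁ ^ (p / n) * C₂ ^ (p * (1 - 1 / n : ℝ)) *
        (4 / (1 - p * (1 - 1 / n : ℝ)))) with hK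
  have hK0 : 0 ≤ K := by
    have : 0 < 1 - p * (1 - 1 / n : ℝ) := by linarith
    positivity
  refine ⟨15 / 2 * K + 1, by positivity, ?_⟩
  intro G α β hαβ hG hL h1
  have hloc : ∀ s, s ∈ Icc α β ∧ G 1 s ≠ 0 → ∃ r, 0 < r ∧ r ≤ β - α ∧
      ∫⁻ t in Icc α β ∩ Icc (s - r) (s + r), rootSpeed n (G 0 t) (G 1 t) ^ p ≤
        ENNReal.ofReal (K * r) := by
    rintro s ⟨hs, hs1⟩
    obtain ⟨r, hr0, hr1, Z, hZc, hZn, hZs, h⟩ := local_structure hn hαβ hG hL h1 hs hs1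
    exact ⟨r, hr0, hr1, local_lintegral hn hp hθ1 hC₁ hC₂ hr0
      (measurableSet_Icc.inter measurableSet_Icc) inter_subset_right Z hZc hZn hZs h⟩
  choose! r hr0 hr1 hrint using hloc
  set S : Set ℝ := {s | s ∈ Icc α β ∧ G 1 s ≠ 0} with hS
  -- The radii are divided by `5` so that the enlarged balls are those of radius `r s`.
  obtain ⟨u, huS, hdisj, hcov⟩ := Vitali.exists_disjoint_subfamily_covering_enlargement_closedBall
    S id (fun s => r s / 5) ((β - α) / 5) (fun s hs => by have := hr1 s hs; linarith) 5 (by norm_num)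
  have hucount : u.Countable := by
    refine hdisj.countable_of_nonempty_interior fun s hs => ?_
    have : 0 < r s / 5 := by have := hr0 s (huS hs); positivity
    exact ⟨s, mem_interior_iff_mem_nhds.2 (Metric.closedBall_mem_nhds _ this)⟩
  have := hucount.to_subtype
  set U : Set ℝ := ⋃ s : u, Icc α β ∩ Icc ((s : ℝ) - r s) (s + r s) with hU
  have hUm : MeasurableSet U :=
    MeasurableSet.iUnion fun s => measurableSet_Icc.inter measurableSet_Icc
  have hsumle : ∑' s : u, volume (Metric.closedBall (s : ℝ) (r s / 5)) ≤
      ENNReal.ofReal (3 * (β - α)) := by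
    have hd : Pairwise (Function.onFun Disjoint
        fun s : u => Metric.closedBall (s : ℝ) (r s / 5)) := by
      intro a b hab
      exact hdisj a.2 b.2 (fun h => hab (Subtype.ext h))
    rw [← measure_iUnion hd (fun s => Metric.isClosed_closedBall.measurableSet)]
    have hsub : (⋃ s : u, Metric.closedBall (s : ℝ) (r s / 5)) ⊆
        Icc (α - (β - α)) (β + (β - α)) := by
      refine iUnion_subset fun s => ?_
      rw [Real.closedBall_eq_Icc]
      have h1 := hr1 s (huS s.2)
      have h2 := hr0 s (huS s.2)
      have h3 := (huS s.2).1
      exact Icc_subset_Icc (by linarith [h3.1]) (by linarith [h3.2])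
    refine (measure_mono hsub).trans ?_
    rw [Real.volume_Icc]
    apply ENNReal.ofReal_le_ofReal
    linarith
  calc ∫⁻ t in Icc α β, rootSpeed n (G 0 t) (G 1 t) ^ p
      ≤ ∫⁻ t in Icc α β, U.indicator (fun t => rootSpeed n (G 0 t) (G 1 t) ^ p) t := by
        refine setLIntegral_mono' measurableSet_Icc fun t ht => ?_
        by_cases h0 : G 1 t = 0
        · rw [h0, rootSpeed_zero, ENNReal.zero_rpow_of_pos hp]; exact bot_le
        · have htU : t ∈ U := by
            obtain ⟨s, hs, hsub⟩ := hcov t ⟨ht, h0⟩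
            have htr : 0 < r t := hr0 t ⟨ht, h0⟩
            have := hsub (Metric.mem_closedBall_self (by positivity))
            simp only [id] at this
            rw [mul_div_cancel₀ _ (by norm_num), Real.closedBall_eq_Icc] at this
            exact mem_iUnion.2 ⟨⟨s, hs⟩, ht, this⟩
          rw [indicator_of_mem htU]
    _ ≤ ∫⁻ t, U.indicator (fun t => rootSpeed n (G 0 t) (G 1 t) ^ p) t :=
        setLIntegral_le_lintegral _ _
    _ = ∫⁻ t in U, rootSpeed n (G 0 t) (G 1 t) ^ p := lintegral_indicator hUm _
    _ ≤ ∑' s : u, ∫⁻ t in Icc α β ∩ Icc ((s : ℝ) - r s) (s + r s),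
          rootSpeed n (G 0 t) (G 1 t) ^ p := lintegral_iUnion_le _ _
    _ ≤ ∑' s : u, ENNReal.ofReal (5 / 2 * K) * volume (Metric.closedBall (s : ℝ) (r s / 5)) := by
        refine ENNReal.tsum_le_tsum fun s => (hrint s (huS s.2)).trans ?_
        rw [Real.volume_closedBall, ← ENNReal.ofReal_mul (by positivity)]
        apply ENNReal.ofReal_le_ofReal
        linarith
    _ = ENNReal.ofReal (5 / 2 * K) * ∑' s : u, volume (Metric.closedBall (s : ℝ) (r s / 5)) :=
        ENNReal.tsum_mul_left
    _ ≤ ENNReal.ofReal (5 / 2 * K) * ENNReal.ofReal (3 * (β - α)) := by gcongr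
    _ = ENNReal.ofReal (5 / 2 * K * (3 * (β - α))) := by
        rw [← ENNReal.ofReal_mul (by positivity)]
    _ ≤ _ := by
        apply ENNReal.ofReal_le_ofReal
        nlinarith

/-! ### Continuous radicals: derivative and absolute continuity -/

lemma hasDerivAt_root {e : ℕ} (he : e ≠ 0) {f g : ℝ → ℂ} {g' : ℂ} {t : ℝ}
    (hf : ContinuousAt f t) (hft : f t ≠ 0) (hfg : ∀ᶠ s in nhds t, f s ^ e = g s)
    (hg : HasDerivAt g g' t) : HasDerivAt f ((e * f t ^ (e - 1))⁻¹ * g') t := by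
  have hne : (e : ℂ) * f t ^ (e - 1) ≠ 0 :=
    mul_ne_zero (Nat.cast_ne_zero.2 he) (pow_ne_zero _ hft)
  have hpow : HasStrictDerivAt (fun z : ℂ => z ^ e) (e * f t ^ (e - 1)) (f t) :=
    hasStrictDerivAt_pow e (f t)
  have hinv := (hpow.to_localInverse hne).hasDerivAt
  have hcomp := hinv.comp_of_eq t hg hfg.self_of_nhds
  have hleft := (hpow.hasStrictFDerivAt_equiv hne).eventually_left_inverse
  refine hcomp.congr_of_eventuallyEq ?_
  filter_upwards [hf.eventually hleft, hfg] with s hs hs'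
  rw [Function.comp_apply, ← hs']
  exact hs.symm

/-- A function that vanishes at `t` and is differentiable there with nonzero derivative has `t` as
an isolated zero, and there are only countably many of those. -/
lemma countable_zero_deriv_ne_zero (f : ℝ → ℂ) : {t | f t = 0 ∧ deriv f t ≠ 0}.Countable := by
  refine (countable_setOfPred_isolated_right_within
    (s := {t | f t = 0 ∧ deriv f t ≠ 0})).mono ?_
  intro t ht
  refine ⟨ht, ?_⟩
  have hd : HasDerivAt f (deriv f t) t :=
    (differentiableAt_of_deriv_ne_zero ht.2).hasDerivAt
  have h1 := hd.eventually_ne (c := 0) ht.2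
  rw [← Filter.empty_mem_iff_bot]
  have h2 : ∀ᶠ z in nhdsWithin t ({t | f t = 0 ∧ deriv f t ≠ 0} ∩ Ioi t), f z ≠ 0 :=
    h1.filter_mono (nhdsWithin_mono _ fun z hz => ne_of_gt hz.2)
  have h3 : ∀ᶠ z in nhdsWithin t ({t | f t = 0 ∧ deriv f t ≠ 0} ∩ Ioi t), f z = 0 :=
    eventually_nhdsWithin_of_forall fun z hz => hz.1.1
  filter_upwards [h2, h3] with z hz hz' using absurd hz' hz

lemma enorm_sub_le_of_differentiable {f : ℝ → ℂ} {x y : ℝ} (hxy : x ≤ y)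
    (hc : ContinuousOn f (Icc x y)) (hd : ∀ t ∈ Ioo x y, DifferentiableAt ℝ f t) :
    ‖f y - f x‖ₑ ≤ ∫⁻ t in Ioo x y, ‖deriv f t‖ₑ := by
  by_cases hfin : ∫⁻ t in Ioo x y, ‖deriv f t‖ₑ = ⊤
  · rw [hfin]; exact le_top
  have hint : IntegrableOn (deriv f) (Ioo x y) :=
    ⟨(measurable_deriv f).aestronglyMeasurable, lt_top_iff_ne_top.2 hfin⟩
  have hii : IntervalIntegrable (deriv f) volume x y := by
    rw [intervalIntegrable_iff_integrableOn_Ioo_of_le hxy]; exact hint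
  rw [← intervalIntegral.integral_eq_sub_of_hasDerivAt_of_le hxy hc
    (fun t ht => (hd t ht).hasDerivAt) hii, intervalIntegral.integral_of_le hxy,
    integral_Ioc_eq_integral_Ioo]
  exact enorm_integral_le_lintegral_enorm _

/-- Differentiability off the zero set suffices for the fundamental theorem of calculus in the form
of an inequality: between its first and its last zero a function has increment `0`. -/
lemma enorm_sub_le_lintegral_deriv {f : ℝ → ℂ} {x y : ℝ} (hxy : x ≤ y) (hc : ContinuousOn f (Icc x y))
    (hd : ∀ t ∈ Icc x y, f t ≠ 0 → DifferentiableAt ℝ f t) :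
    ‖f y - f x‖ₑ ≤ ∫⁻ t in Ioo x y, ‖deriv f t‖ₑ := by
  set Z : Set ℝ := Icc x y ∩ f ⁻¹' {0} with hZ
  rcases Z.eq_empty_or_nonempty with hemp | hne
  · refine enorm_sub_le_of_differentiable hxy hc fun t ht => hd t (Ioo_subset_Icc_self ht) ?_
    intro h0
    have : t ∈ Z := ⟨Ioo_subset_Icc_self ht, h0⟩
    rw [hemp] at this
    exact this
  have hZc : IsCompact Z :=
    isCompact_Icc.of_isClosed_subset (hc.preimage_isClosed_of_isClosed isClosed_Icc
      isClosed_singleton) inter_subset_left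
  obtain ⟨x₁, hx₁, hmin⟩ := hZc.exists_isLeast hne
  obtain ⟨y₁, hy₁, hmax⟩ := hZc.exists_isGreatest hne
  have hx0 : f x₁ = 0 := hx₁.2
  have hy0 : f y₁ = 0 := hy₁.2
  have hxy₁ : x₁ ≤ y₁ := hmin hy₁
  have hA := enorm_sub_le_of_differentiable hx₁.1.1
    (hc.mono (Icc_subset_Icc_right hx₁.1.2)) (fun t ht => hd t ⟨ht.1.le, ht.2.le.trans hx₁.1.2⟩
      fun h0 => absurd (hmin ⟨⟨ht.1.le, ht.2.le.trans hx₁.1.2⟩, h0⟩) (not_le.2 ht.2))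
  have hB := enorm_sub_le_of_differentiable hy₁.1.2
    (hc.mono (Icc_subset_Icc_left hy₁.1.1)) (fun t ht => hd t ⟨hy₁.1.1.trans ht.1.le, ht.2.le⟩
      fun h0 => absurd (hmax ⟨⟨hy₁.1.1.trans ht.1.le, ht.2.le⟩, h0⟩) (not_le.2 ht.1))
  have hdisj : Disjoint (Ioo x x₁) (Ioo y₁ y) :=
    Set.disjoint_left.2 fun t h1 h2 => absurd (h1.2.trans_le hxy₁) (not_lt.2 h2.1.le)
  calc ‖f y - f x‖ₑ ≤ ‖f x₁ - f x‖ₑ + ‖f y - f y₁‖ₑ := by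
        have : f y - f x = (f x₁ - f x) + (f y - f y₁) := by rw [hx0, hy0]; ring
        rw [this]; exact enorm_add_le _ _
    _ ≤ (∫⁻ t in Ioo x x₁, ‖deriv f t‖ₑ) + ∫⁻ t in Ioo y₁ y, ‖deriv f t‖ₑ := add_le_add hA hB
    _ = ∫⁻ t in Ioo x x₁ ∪ Ioo y₁ y, ‖deriv f t‖ₑ :=
        (lintegral_union measurableSet_Ioo hdisj).symm
    _ ≤ _ := lintegral_mono_set (union_subset (Ioo_subset_Ioo_right hx₁.1.2)
        (Ioo_subset_Ioo_left hy₁.1.1))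

lemma absolutelyContinuousOn_of_lintegral {f : ℝ → ℂ} {α β : ℝ} (hc : ContinuousOn f (Ioo α β))
    (hd : ∀ t ∈ Ioo α β, f t ≠ 0 → DifferentiableAt ℝ f t)
    (hfin : ∫⁻ t in Ioo α β, ‖deriv f t‖ₑ ≠ ⊤) : AbsolutelyContinuousOn f (Ioo α β) := by
  intro ε hε
  obtain ⟨δ, hδ, hδ'⟩ := exists_pos_setLIntegral_lt_of_measure_lt hfin
    (ENNReal.ofReal_pos.2 hε).ne'
  obtain ⟨δ₁, hδ₁, hδ₁'⟩ := ENNReal.lt_iff_exists_nnreal_btwn.1 hδ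
  refine ⟨δ₁, by exact_mod_cast hδ₁, ?_⟩
  intro m a b hab hs hdisj hsum
  have hU : ⋃ i, Ioo (a i) (b i) ⊆ Ioo α β :=
    iUnion_subset fun i => Ioo_subset_Icc_self.trans (hs i)
  have hpd : Pairwise (Function.onFun Disjoint fun i => Ioo (a i) (b i)) :=
    fun i j hij => Set.disjoint_iff_inter_eq_empty.2 (hdisj hij)
  have hvol : volume (⋃ i, Ioo (a i) (b i)) = ENNReal.ofReal (∑ i, (b i - a i)) := by
    rw [measure_iUnion hpd fun i => measurableSet_Ioo, tsum_fintype,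
      ENNReal.ofReal_sum_of_nonneg fun i _ => sub_nonneg.2 (hab i)]
    simp
  have hlt : ∫⁻ t in ⋃ i, Ioo (a i) (b i), ‖deriv f t‖ₑ < ENNReal.ofReal ε := by
    have := hδ' (⋃ i, Ioo (a i) (b i)) (by
      refine (Measure.restrict_apply_le _ _).trans_lt ?_
      rw [hvol]
      refine lt_of_le_of_lt ?_ hδ₁'
      rw [ENNReal.ofReal]
      exact_mod_cast Real.toNNReal_le_iff_le_coe.2 hsum.le)
    rwa [Measure.restrict_restrict (MeasurableSet.iUnion fun i => measurableSet_Ioo),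
      inter_eq_left.2 hU] at this
  rw [lintegral_iUnion (fun i => measurableSet_Ioo) hpd, tsum_fintype] at hlt
  have hle : ENNReal.ofReal (∑ i, ‖f (b i) - f (a i)‖) < ENNReal.ofReal ε := by
    refine lt_of_le_of_lt ?_ hlt
    rw [ENNReal.ofReal_sum_of_nonneg fun i _ => norm_nonneg _]
    refine Finset.sum_le_sum fun i _ => ?_
    rw [ofReal_norm]
    exact enorm_sub_le_lintegral_deriv (hab i) (hc.mono (hs i)) fun t ht => hd t (hs i ht)
  exact (ENNReal.ofReal_lt_ofReal_iff hε).1 hle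

/-! ### The complex radical -/

lemma norm_sub_le_lipConstOn {f : ℝ → ℂ} {s : Set ℝ}
    (h : ∃ C : ℝ, 0 ≤ C ∧ ∀ x ∈ s, ∀ y ∈ s, ‖f x - f y‖ ≤ C * |x - y|) {x y : ℝ} (hx : x ∈ s)
    (hy : y ∈ s) : ‖f x - f y‖ ≤ lipConstOn f s * |x - y| := by
  rcases eq_or_ne x y with rfl | hne
  · simp
  have hpos : 0 < |x - y| := abs_pos.2 (sub_ne_zero.2 hne)
  rw [← div_le_iff₀ hpos]
  exact le_csInf h fun C hC => (div_le_iff₀ hpos).2 (hC.2 x hx y hy)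

/-- Replacing a complex number of modulus `r ^ e` by a component `x` can only increase the root
speed; the factor `D` undoes the normalization by `D ^ e`. The term for `x = 0` is `0` or `∞`. -/
lemma le_rootSpeed {e : ℕ} (he : 2 ≤ e) {D r x y : ℝ} (hD : 0 < D) (hr : 0 < r)
    (hx : |x| ≤ r ^ e) :
    ENNReal.ofReal (|y| / r ^ (e - 1)) ≤
      ENNReal.ofReal D * rootSpeed e (x / D ^ e) (y / D ^ e) := by
  have he0 : (2 : ℝ) ≤ e := by exact_mod_cast he
  have ha : 0 < 1 - 1 / (e : ℝ) := by
    rw [sub_pos, div_lt_one (by linarith)]; linarith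
  have h1 : |x / D ^ e| ^ (1 - 1 / (e : ℝ)) ≤ (r / D) ^ (e - 1) := by
    have h2 : |x / D ^ e| ≤ (r / D) ^ e := by
      rw [abs_div, abs_of_pos (pow_pos hD e), div_pow]
      gcongr
    refine (Real.rpow_le_rpow (abs_nonneg _) h2 ha.le).trans (le_of_eq ?_)
    rw [← Real.rpow_natCast (r / D) e, ← Real.rpow_mul (by positivity),
      ← Real.rpow_natCast (r / D) (e - 1), Nat.cast_sub (by omega)]
    congr 1
    field_simp
    simp
  have h3 : ENNReal.ofReal (|y / D ^ e| / (r / D) ^ (e - 1)) ≤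
      rootSpeed e (x / D ^ e) (y / D ^ e) := by
    rw [rootSpeed, ENNReal.ofReal_div_of_pos (by positivity)]
    exact ENNReal.div_le_div_left (ENNReal.ofReal_le_ofReal h1) _
  refine le_trans (le_of_eq ?_) (mul_le_mul_right h3 _)
  rw [← ENNReal.ofReal_mul hD.le]
  congr 1
  rw [abs_div, abs_of_pos (pow_pos hD e), div_pow]
  obtain ⟨k, rfl⟩ : ∃ k, e = k + 1 := ⟨e - 1, by omega⟩
  simp only [Nat.add_sub_cancel]
  field_simp
  ring

lemma enorm_root_deriv_le {e : ℕ} (he : 2 ≤ e) {D : ℝ} (hD : 0 < D) {z w : ℂ} (hz : z ≠ 0) :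
    ‖((e : ℂ) * z ^ (e - 1))⁻¹ * w‖ₑ ≤ ENNReal.ofReal D *
      (rootSpeed e ((z ^ e).re / D ^ e) (w.re / D ^ e) +
        rootSpeed e ((z ^ e).im / D ^ e) (w.im / D ^ e)) := by
  have he0 : (2 : ℝ) ≤ e := by exact_mod_cast he
  have hr : 0 < ‖z‖ := norm_pos_iff.2 hz
  have h1 := le_rootSpeed he (y := w.re) hD hr
    ((Complex.abs_re_le_norm (z ^ e)).trans_eq (norm_pow z e))
  have h2 := le_rootSpeed he (y := w.im) hD hr
    ((Complex.abs_im_le_norm (z ^ e)).trans_eq (norm_pow z e))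
  rw [mul_add]
  refine le_trans ?_ (add_le_add h1 h2)
  rw [← ENNReal.ofReal_add (by positivity) (by positivity), ← ofReal_norm]
  apply ENNReal.ofReal_le_ofReal
  rw [norm_mul, norm_inv, norm_mul, norm_pow, Complex.norm_natCast, ← add_div,
    inv_mul_eq_div]
  apply div_le_div₀ (by positivity) (Complex.norm_le_abs_re_add_abs_im w) (by positivity)
  exact le_mul_of_one_le_left (by positivity) (by linarith)

lemma lintegral_add_rpow_le {μ : Measure ℝ} {F G : ℝ → ℝ≥0∞} (hF : AEMeasurable F μ) {p : ℝ}
    (hp : 1 ≤ p) {K : ℝ≥0∞} (h1 : ∫⁻ t, F t ^ p ∂μ ≤ K) (h2 : ∫⁻ t, G t ^ p ∂μ ≤ K) :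
    ∫⁻ t, (F t + G t) ^ p ∂μ ≤ 2 ^ p * K := by
  calc ∫⁻ t, (F t + G t) ^ p ∂μ ≤ ∫⁻ t, 2 ^ (p - 1) * (F t ^ p + G t ^ p) ∂μ :=
        lintegral_mono fun t => ENNReal.rpow_add_le_mul_rpow_add_rpow _ _ hp
    _ = 2 ^ (p - 1) * (∫⁻ t, F t ^ p ∂μ + ∫⁻ t, G t ^ p ∂μ) := by
        rw [lintegral_const_mul' _ _ (ENNReal.rpow_ne_top_of_nonneg (by linarith) (by simp)),
          lintegral_add_left' (hF.pow_const p)]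
    _ ≤ 2 ^ (p - 1) * (K + K) := by gcongr
    _ = 2 ^ p * K := by
        rw [← two_mul, ← mul_assoc]
        congr 1
        nth_rw 2 [← ENNReal.rpow_one 2]
        rw [← ENNReal.rpow_add _ _ (by simp) (by simp)]
        simp

/-- After division by the constant `M` of the two bounds, the derivatives of a real or imaginary part
`L ∘ b` satisfy the hypotheses of `root_lintegral`. -/
lemma component_bound {e : ℕ} {α β M : ℝ} (hαβ : α < β) (hM : 0 < M) {b : ℝ → ℂ}
    (hb : CkLipOn (e - 1) b (Icc α β))
    (h1 : ∀ t ∈ Icc α β, ‖iteratedDerivWithin 1 b (Icc α β) t‖ ≤ M * (β - α) ^ (e - 1))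
    (h2 : lipConstOn (iteratedDerivWithin (e - 1) b (Icc α β)) (Icc α β) ≤ M)
    (L : ℂ →L[ℝ] ℝ) (hL : ∀ z, |L z| ≤ ‖z‖) :
    DerivChain (e - 1) (fun i t => L (iteratedDerivWithin i b (Icc α β) t) / M) α β ∧
    (∀ x ∈ Icc α β, ∀ y ∈ Icc α β,
      |L (iteratedDerivWithin (e - 1) b (Icc α β) x) / M -
        L (iteratedDerivWithin (e - 1) b (Icc α β) y) / M| ≤ |x - y|) ∧
    (∀ t ∈ Icc α β, |L (iteratedDerivWithin 1 b (Icc α β) t) / M| ≤ (β - α) ^ (e - 1)) := by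
  have hu := uniqueDiffOn_Icc hαβ
  refine ⟨?_, ?_, ?_⟩
  · intro i hi t ht
    have hd := (hb.1.differentiableOn_iteratedDerivWithin (by exact_mod_cast hi) hu t
      ht).hasDerivWithinAt
    rw [← iteratedDerivWithin_succ] at hd
    exact (L.hasFDerivAt.comp_hasDerivWithinAt t hd).div_const M
  · intro x hx y hy
    rw [← sub_div, ← map_sub, abs_div, abs_of_pos hM, div_le_iff₀ hM]
    refine (hL _).trans ((norm_sub_le_lipConstOn hb.2 hx hy).trans ?_)
    rw [mul_comm |x - y|]
    gcongr
  · intro t ht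
    rw [abs_div, abs_of_pos hM, div_le_iff₀ hM, mul_comm]
    exact (hL _).trans (h1 t ht)

/-- **Integral bounds for the derivative of a radical.**
Let `e ≥ 2`, `e′ = e/(e-1)`, `1 ≤ p < e′`, and `C₀ > 0`.  There is `C = C(e,p,C₀)` such
that for every bounded open interval `I = (α,β)` and `A > 0`: if `b ∈ C^{e-1,1}(Ī, ℂ)`
satisfies `‖b′‖_{L^∞(I)} ≤ C₀ |I|^{-1} A^e` and `Lip_I(b^{(e-1)}) ≤ C₀ |I|^{-e} A^e`,
then every continuous `b̂ : I → ℂ` with `b̂^e = b` is absolutely continuous and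
satisfies the normalized bound `|I|^{-1/p} ‖b̂′‖_{L^p(I)} ≤ C |I|^{-1} A`. -/
theorem radical_normalized_Lp_bound
    (e : ℕ) (he : 2 ≤ e) (p : ℝ) (hp : 1 ≤ p) (hp' : p * ((e : ℝ) - 1) < e)
    (C₀ : ℝ) (hC₀ : 0 < C₀) :
    ∃ C : ℝ, 0 < C ∧
      ∀ α β : ℝ, α < β → ∀ A : ℝ, 0 < A →
        ∀ b : ℝ → ℂ,
          CkLipOn (e - 1) b (Set.Icc α β) →
          (∀ t ∈ Set.Icc α β,
            ‖iteratedDerivWithin 1 b (Set.Icc α β) t‖ ≤ C₀ * (β - α)⁻¹ * A ^ e) →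
          lipConstOn (iteratedDerivWithin (e - 1) b (Set.Icc α β)) (Set.Icc α β) ≤
            C₀ * (β - α) ^ (-(e : ℝ)) * A ^ e →
          ∀ bhat : ℝ → ℂ,
            ContinuousOn bhat (Set.Ioo α β) →
            (∀ t ∈ Set.Ioo α β, bhat t ^ e = b t) →
            AbsolutelyContinuousOn bhat (Set.Ioo α β) ∧
            ENNReal.ofReal ((β - α) ^ (-(1 / p))) *
                eLpNorm (deriv bhat) (ENNReal.ofReal p) (volume.restrict (Set.Ioo α β)) ≤
              ENNReal.ofReal (C * (β - α)⁻¹ * A) := by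
  have he0 : (2 : ℝ) ≤ e := by exact_mod_cast he
  have hp0 : 0 < p := by linarith
  have hθ1 : p * (1 - 1 / e : ℝ) < 1 := by
    have : p * (1 - 1 / e : ℝ) = p * (e - 1) / e := by field_simp
    rw [this, div_lt_one (by linarith)]
    exact hp'
  obtain ⟨C₁, hC₁, hroot⟩ := root_lintegral he hp0 hθ1
  refine ⟨C₀ ^ (1 / (e : ℝ)) * (2 * C₁ ^ (1 / p)), by positivity, ?_⟩
  intro α β hαβ A hA b hb hb1 hb2 bhat hcont hpow
  have hℓ : 0 < β - α := sub_pos.2 hαβ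
  -- With this choice the two hypotheses on `b` read `‖b'‖ ≤ D ^ e * |I| ^ (e - 1)` and
  -- `Lip b^(e-1) ≤ D ^ e`.
  set D : ℝ := C₀ ^ (1 / (e : ℝ)) * A / (β - α) with hD
  have hD0 : 0 < D := by positivity
  have hDe : D ^ e = C₀ * A ^ e / (β - α) ^ e := by
    rw [hD, div_pow, mul_pow, ← Real.rpow_natCast (C₀ ^ (1 / (e : ℝ))), ← Real.rpow_mul hC₀.le,
      one_div, inv_mul_cancel₀ (by linarith), Real.rpow_one]
  have hM : 0 < D ^ e := by positivity
  have hb1' : ∀ t ∈ Icc α β,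
      ‖iteratedDerivWithin 1 b (Icc α β) t‖ ≤ D ^ e * (β - α) ^ (e - 1) := by
    intro t ht
    refine (hb1 t ht).trans_eq ?_
    rw [hDe]
    obtain ⟨k, rfl⟩ : ∃ k, e = k + 1 := ⟨e - 1, by omega⟩
    simp only [Nat.add_sub_cancel]
    field_simp
    ring
  have hb2' : lipConstOn (iteratedDerivWithin (e - 1) b (Icc α β)) (Icc α β) ≤ D ^ e := by
    refine hb2.trans_eq ?_
    rw [hDe, Real.rpow_neg hℓ.le, Real.rpow_natCast]
    field_simp
  have hu := uniqueDiffOn_Icc hαβ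
  have hbd : ∀ t ∈ Ioo α β, HasDerivAt b (iteratedDerivWithin 1 b (Icc α β) t) t := by
    intro t ht
    have h := (hb.1.differentiableOn (by exact_mod_cast (by omega : e - 1 ≠ 0)) t
      (Ioo_subset_Icc_self ht)).hasDerivWithinAt
    rw [← iteratedDerivWithin_one] at h
    exact h.hasDerivAt (Icc_mem_nhds ht.1 ht.2)
  have hderiv : ∀ t ∈ Ioo α β, bhat t ≠ 0 → HasDerivAt bhat
      ((e * bhat t ^ (e - 1))⁻¹ * iteratedDerivWithin 1 b (Icc α β) t) t := by
    intro t ht h0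
    have hmem := Ioo_mem_nhds ht.1 ht.2
    exact hasDerivAt_root (by omega) (hcont.continuousAt hmem) h0
      (Filter.mem_of_superset hmem hpow) (hbd t ht)
  -- `Φ L` is the root speed of the component `L b / D ^ e`.
  set Φ : (ℂ →L[ℝ] ℝ) → ℝ → ℝ≥0∞ := fun L t =>
    rootSpeed e (L (iteratedDerivWithin 0 b (Icc α β) t) / D ^ e)
      (L (iteratedDerivWithin 1 b (Icc α β) t) / D ^ e) with hΦ
  have hΦm : ∀ L, AEMeasurable (Φ L) (volume.restrict (Ioo α β)) := by
    intro L
    have hm : ∀ i : ℕ, i ≤ e - 1 → AEMeasurable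
        (fun t => L (iteratedDerivWithin i b (Icc α β) t) / D ^ e)
        (volume.restrict (Ioo α β)) := by
      intro i hi
      have hc := (L.continuous.comp_continuousOn (hb.1.continuousOn_iteratedDerivWithin
        (by exact_mod_cast hi) hu)).div_const (D ^ e)
      exact (hc.mono Ioo_subset_Icc_self).aemeasurable measurableSet_Ioo
    have h0 := hm 0 (by omega)
    have h1 := hm 1 (by omega)
    exact (by fun_prop : AEMeasurable (fun t => ENNReal.ofReal
      |L (iteratedDerivWithin 1 b (Icc α β) t) / D ^ e|) _).div
      (h0.abs.pow_const _).ennreal_ofReal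
  have hΦint : ∀ L : ℂ →L[ℝ] ℝ, (∀ z, |L z| ≤ ‖z‖) →
      ∫⁻ t in Ioo α β, Φ L t ^ p ≤ ENNReal.ofReal (C₁ * (β - α)) := by
    intro L hL
    obtain ⟨hG, hGL, hG1⟩ := component_bound hαβ hM hb hb1' hb2' L hL
    exact (lintegral_mono_set Ioo_subset_Icc_self).trans (hroot _ α β hαβ hG hGL hG1)
  have hre := hΦint Complex.reCLM fun z => Complex.abs_re_le_norm z
  have him := hΦint Complex.imCLM fun z => Complex.abs_im_le_norm z
  have hae : ∀ᵐ t ∂(volume.restrict (Ioo α β)), ‖deriv bhat t‖ₑ ≤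
      ENNReal.ofReal D * (Φ Complex.reCLM t + Φ Complex.imCLM t) := by
    have hcount : ∀ᵐ t ∂(volume.restrict (Ioo α β)),
        t ∉ {t | bhat t = 0 ∧ deriv bhat t ≠ 0} :=
      ae_restrict_of_ae (measure_eq_zero_iff_ae_notMem.1
        ((countable_zero_deriv_ne_zero bhat).measure_zero volume))
    filter_upwards [hcount, ae_restrict_mem measurableSet_Ioo] with t ht htI
    by_cases h0 : bhat t = 0
    · have : deriv bhat t = 0 := by
        by_contra hne
        exact ht ⟨h0, hne⟩
      rw [this, enorm_zero]
      exact bot_le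
    · rw [(hderiv t htI h0).deriv]
      refine (enorm_root_deriv_le he hD0 h0).trans_eq ?_
      simp only [hΦ, iteratedDerivWithin_zero, Complex.reCLM_apply, Complex.imCLM_apply,
        hpow t htI]
  have hLp : ∫⁻ t in Ioo α β, ‖deriv bhat t‖ₑ ^ p ≤
      ENNReal.ofReal (D ^ p * (2 ^ p * (C₁ * (β - α)))) := by
    calc ∫⁻ t in Ioo α β, ‖deriv bhat t‖ₑ ^ p
        ≤ ∫⁻ t in Ioo α β,
            ENNReal.ofReal D ^ p * (Φ Complex.reCLM t + Φ Complex.imCLM t) ^ p := by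
          refine lintegral_mono_ae ?_
          filter_upwards [hae] with t ht
          rw [← ENNReal.mul_rpow_of_nonneg _ _ hp0.le]
          exact ENNReal.rpow_le_rpow ht hp0.le
      _ = ENNReal.ofReal D ^ p *
            ∫⁻ t in Ioo α β, (Φ Complex.reCLM t + Φ Complex.imCLM t) ^ p :=
          lintegral_const_mul' _ _ (ENNReal.rpow_ne_top_of_nonneg hp0.le ENNReal.ofReal_ne_top)
      _ ≤ ENNReal.ofReal D ^ p * (2 ^ p * ENNReal.ofReal (C₁ * (β - α))) := by
          gcongr
          exact lintegral_add_rpow_le (hΦm _) hp hre him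
      _ = _ := by
          rw [ENNReal.ofReal_mul (p := D ^ p) (by positivity),
            ENNReal.ofReal_mul (p := 2 ^ p) (by positivity),
            ENNReal.ofReal_rpow_of_pos hD0, ← ENNReal.ofReal_rpow_of_pos two_pos,
            ENNReal.ofReal_ofNat]
  have hnorm : eLpNorm (deriv bhat) (ENNReal.ofReal p) (volume.restrict (Ioo α β)) ≤
      ENNReal.ofReal (D * (2 * (C₁ * (β - α)) ^ (1 / p))) := by
    rw [eLpNorm_eq_lintegral_rpow_enorm_toReal (ENNReal.ofReal_pos.2 hp0).ne'
      ENNReal.ofReal_ne_top, ENNReal.toReal_ofReal hp0.le]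
    refine (ENNReal.rpow_le_rpow hLp (by positivity)).trans_eq ?_
    rw [ENNReal.ofReal_rpow_of_nonneg (by positivity) (by positivity),
      Real.mul_rpow (by positivity) (by positivity), Real.mul_rpow (by positivity) (by positivity),
      ← Real.rpow_mul hD0.le, ← Real.rpow_mul two_pos.le, mul_one_div_cancel hp0.ne',
      Real.rpow_one, Real.rpow_one]
  refine ⟨?_, ?_⟩
  · refine absolutelyContinuousOn_of_lintegral hcont
      (fun t ht h0 => (hderiv t ht h0).differentiableAt) ?_
    have hmem : MemLp (deriv bhat) (ENNReal.ofReal p) (volume.restrict (Ioo α β)) :=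
      ⟨(measurable_deriv bhat).aestronglyMeasurable, hnorm.trans_lt ENNReal.ofReal_lt_top⟩
    exact (hmem.integrable (by simpa using hp)).2.ne
  · refine (mul_le_mul_right hnorm _).trans ?_
    rw [← ENNReal.ofReal_mul (by positivity)]
    refine ENNReal.ofReal_le_ofReal (le_of_eq ?_)
    have hcancel : (β - α) ^ (-(1 / p)) * (β - α) ^ (1 / p) = 1 := by
      rw [← Real.rpow_add hℓ]; simp
    rw [Real.mul_rpow hC₁.le hℓ.le, hD]
    calc _ = C₀ ^ (1 / (e : ℝ)) * A / (β - α) * (2 * C₁ ^ (1 / p)) *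
          ((β - α) ^ (-(1 / p)) * (β - α) ^ (1 / p)) := by ring
      _ = _ := by rw [hcancel]; ring
end
end

section
/- Let d ≥ 1 be an integer, I a bounded open interval, A > 0, and b_1,…,b_m ∈ C^{d−1,1}(Ī, ℂ) with positive integer exponents e_1,…,e_m ≤ d, e := max_i e_i. Let b̂_i : I → ℂ be continuous with b̂_i^{e_i} = b_i. Assume there are constants C₀, C₁ such that for all i and s = 1,…,d−1: ‖b_i^{(s)}‖_{L^∞(I)} ≤ C₀ |I|^{−s} A^{e_i}, Lip_I(b_i^{(d−1)}) ≤ C₀ |I|^{−d} A^{e_i}, and |b̂_i(t)| ≤ C₁ A for all t ∈ I. Let t₁ ∈ I and ℓ satisfy |b̂_ℓ(t₁)| = max_{1≤i≤m} |b̂_i(t₁)| ≠ 0, let 0 < D < 1/3, and let J be an open interval with t₁ ∈ J ⊆ I such that |J| |I|^{−1} A + Σ_{i=1}^m ‖b̂_i′‖_{L^1(J)} = D |b̂_ℓ(t₁)|. Then for all t ∈ J and all i: (i) |b̂_i(t) − b̂_i(t₁)| ≤ D |b̂_ℓ(t₁)|; (ii) 2/3 < 1−D ≤ |b̂_ℓ(t)/b̂_ℓ(t₁)|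 ≤ 1+D < 4/3; (iii) |b̂_i(t)| ≤ (4/3)|b̂_ℓ(t₁)| ≤ 2|b̂_ℓ(t)|; (iv) the length of the curve J ∋ t ↦ ( (b̂_ℓ^{−1}b̂_1)^{e_1},…,(b̂_ℓ^{−1}b̂_m)^{e_m} )(t) is at most 3 e² 2^{e} D; and (v) for all s = 1,…,d−1: ‖b_i^{(s)}‖_{L^∞(J)} ≤ C |J|^{−s} |b̂_ℓ(t₁)|^{e_i} and Lip_J(b_i^{(d−1)}) ≤ C |J|^{−d} |b̂_ℓ(t₁)|^{e_i}, where C depends only on d, C₀, C₁. -/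
/-!
Write `B = ‖b̂_ℓ(t₁)‖`, `J = (γ, δ)`, `I = (α, β)`. The hypothesis on `J` gives two facts: the
`L¹(J)` norms of the `b̂_i'` sum to at most `D B`, and `|J| |I|⁻¹ A ≤ D B ≤ B`.

*Pointwise estimates.* An absolutely continuous `f : ℝ → ℂ` satisfies
`‖f y - f x‖ ≤ ∫ ‖f'‖` (`norm_sub_le_integral_norm_deriv`), so every `b̂_i` moves by at most
`D B` on `J`; the remaining inequalities follow from the triangle inequality and `D < 1/3`.

*Length.* On `J` the quotients `b̂_ℓ⁻¹ b̂_i` are bounded by `2`, so the `e_i`-th power is Lipschitz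
on their range with constant `e_i 2^(e_i - 1)`. With `Φ` a primitive of `∑ ‖b̂_i'‖`, each
quotient varies between `x ≤ y` by at most `(9/2) B⁻¹ (Φ y - Φ x)`. This bound does not depend on
`i`, so in the sup norm on `Fin m → ℂ` it holds for the curve itself, and summing over a partition
(`eVariationOn_le_of_dist_le`) gives the length bound `(9/2) e 2^(e-1) D ≤ 3 e² 2^e D`.

*Derivatives.* Since `e_i ≤ d`, `|J| ≤ |I|` and `|J| |I|⁻¹ A ≤ B`, the Lipschitz constant
`C₀ |I|^(-d) A^(e_i)` is at most `C₀ |J|^(-d) B^(e_i)`. Together with `|b_i| ≤ (4/3)^d B^(e_i)`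
on `J`, interpolation (`exists_interpolation_const`) bounds all intermediate derivatives. The
interpolation inequality comes from Taylor's formula at `t` evaluated at `d` nodes in `J`:
inverting a Vandermonde matrix recovers each Taylor coefficient from these values, up to the
remainder.
-/


open MeasureTheory Set
open scoped ENNReal NNReal

noncomputable section

/-! ### Taylor expansion and interpolation of derivatives -/

/-- Taylor's formula with remainder for a chain of functions `F (k + 1) = (F k)'` whose last member
satisfies a Lipschitz bound at the base point `t`; `x` may lie on either side of `t`. The constant
lacks the factor `1 / (n + 1)!`, which allows a proof by the mean value inequality alone. -/
lemma norm_sub_taylor_sum_le (n : ℕ) : ∀ (F : ℕ → ℝ → ℂ) (t x L : ℝ),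
    (∀ k < n, ∀ y ∈ uIcc t x, HasDerivWithinAt (F k) (F (k + 1) y) (uIcc t x) y) →
    (∀ y ∈ uIcc t x, ‖F n y - F n t‖ ≤ L * |y - t|) →
    ‖F 0 x - ∑ k ∈ Finset.range (n + 1), ((x - t) ^ k / (k.factorial : ℝ)) • F k t‖ ≤
      L * |x - t| ^ (n + 1) := by
  induction n with
  | zero =>
    intro F t x L _ hL
    simpa using hL x right_mem_uIcc
  | succ n ih =>
    intro F t x L hF hL
    rcases eq_or_ne t x with rfl | hne
    · simp [Finset.sum_range_succ', zero_pow]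
    have hpos : 0 < |x - t| := abs_pos.2 (sub_ne_zero.2 hne.symm)
    have hL0 : 0 ≤ L :=
      nonneg_of_mul_nonneg_left ((norm_nonneg _).trans (hL x right_mem_uIcc)) hpos
    set g : ℝ → ℂ := fun y => F 0 y -
      (∑ k ∈ Finset.range (n + 1),
        ((y - t) ^ (k + 1) / ((k + 1).factorial : ℝ)) • F (k + 1) t + F 0 t) with hg
    set g' : ℝ → ℂ := fun y => F 1 y -
      ∑ k ∈ Finset.range (n + 1), ((y - t) ^ k / (k.factorial : ℝ)) • F (k + 1) t with hg'
    have hder : ∀ y ∈ uIcc t x, HasDerivWithinAt g (g' y) (uIcc t x) y := by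
      intro y hy
      refine (hF 0 (Nat.succ_pos n) y hy).sub (HasDerivWithinAt.add_const _ ?_)
      refine HasDerivWithinAt.fun_sum fun k _ => HasDerivWithinAt.smul_const ?_ _
      have h1 : HasDerivAt (fun y : ℝ => (y - t) ^ (k + 1) / ((k + 1).factorial : ℝ))
          (((k + 1 : ℕ) : ℝ) * (y - t) ^ k * 1 / ((k + 1).factorial : ℝ)) y :=
        (((hasDerivAt_id y).sub_const t).pow (k + 1)).div_const _
      convert! h1.hasDerivWithinAt using 1
      rw [Nat.factorial_succ]
      have := Nat.factorial_ne_zero k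
      push_cast
      field_simp
    have hbd : ∀ y ∈ uIcc t x, ‖g' y‖ ≤ L * |x - t| ^ (n + 1) := by
      intro y hy
      have hsub : uIcc t y ⊆ uIcc t x := uIcc_subset_uIcc left_mem_uIcc hy
      have h2 := ih (fun k => F (k + 1)) t y L
        (fun k hk z hz => (hF (k + 1) (by omega) z (hsub hz)).mono hsub)
        (fun z hz => hL z (hsub hz))
      refine h2.trans ?_
      have : |y - t| ≤ |x - t| := abs_sub_left_of_mem_uIcc hy
      gcongr
    have key := (convex_uIcc t x).norm_image_sub_le_of_norm_hasDerivWithin_le hder hbd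
      left_mem_uIcc right_mem_uIcc
    have hgt : g t = 0 := by simp [hg]
    rw [hgt, sub_zero, Real.norm_eq_abs, mul_assoc, ← pow_succ] at key
    rw [Finset.sum_range_succ']
    simpa [hg] using key

/-- Interpolation inequality: if `F 0` is bounded by `M` on `(γ, δ)` and its `n`-th derivative `F n`
has Lipschitz constant `L`, then `‖F s‖ (δ - γ)^s ≤ K (M + L (δ - γ)^(n+1))` for all `s ≤ n`, with
`K` depending only on `n`. -/
lemma exists_interpolation_const (n : ℕ) : ∃ K : ℝ, 0 ≤ K ∧
    ∀ (F : ℕ → ℝ → ℂ) (γ δ M L : ℝ),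
      (∀ k < n, ∀ y ∈ Ioo γ δ, HasDerivWithinAt (F k) (F (k + 1) y) (Ioo γ δ) y) →
      (∀ x ∈ Ioo γ δ, ∀ y ∈ Ioo γ δ, ‖F n x - F n y‖ ≤ L * |x - y|) →
      (∀ y ∈ Ioo γ δ, ‖F 0 y‖ ≤ M) → 0 ≤ L →
      ∀ s ≤ n, ∀ t ∈ Ioo γ δ, ‖F s t‖ * (δ - γ) ^ s ≤ K * (M + L * (δ - γ) ^ (n + 1)) := by
  classical
  -- The nodes are taken in `[0, 1/2)`: from any point of an interval, at least one of the two
  -- directions leaves room for half of its length.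
  set v : Fin (n + 1) → ℝ := fun j => (j : ℝ) / (2 * (n + 1)) with hv
  have hv0 : ∀ j, 0 ≤ v j := fun j => by positivity
  have hv1 : ∀ j, v j < 1 / 2 := by
    intro j
    have : ((j : ℕ) : ℝ) < n + 1 := by exact_mod_cast j.2
    rw [hv]
    simp only
    rw [div_lt_div_iff₀ (by positivity) (by norm_num)]
    linarith
  have hinj : Function.Injective v := by
    intro i j hij
    have h2 : (2 * ((n : ℝ) + 1)) ≠ 0 := by positivity
    have := (div_left_inj' h2).1 hij
    exact Fin.ext (by exact_mod_cast this)
  -- Row `s` of the inverse Vandermonde matrix extracts the coefficient of degree `s`.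
  have hdet : IsUnit (Matrix.vandermonde v).det :=
    isUnit_iff_ne_zero.2 (Matrix.det_vandermonde_ne_zero_iff.2 hinj)
  set W := (Matrix.vandermonde v)⁻¹ with hW
  have hWv : ∀ s k : Fin (n + 1), ∑ j, W s j * v j ^ (k : ℕ) = if s = k then 1 else 0 := by
    intro s k
    have h := congrFun (congrFun (Matrix.nonsing_inv_mul _ hdet) s) k
    rw [Matrix.mul_apply, Matrix.one_apply] at h
    exact h
  refine ⟨n.factorial * ∑ s, ∑ j, |W s j|, by positivity, ?_⟩
  intro F γ δ M L hF hL hM hL0 s hs t ht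
  have hh : 0 < δ - γ := by linarith [ht.1, ht.2]
  -- The sign of `h'` points from `t` towards the farther endpoint.
  obtain ⟨h', hh', hmem⟩ : ∃ h' : ℝ, |h'| = δ - γ ∧ ∀ j, t + v j * h' ∈ Ioo γ δ := by
    rcases le_total t ((γ + δ) / 2) with h | h
    · refine ⟨δ - γ, abs_of_pos hh, fun j => ⟨?_, ?_⟩⟩
      · nlinarith [mul_nonneg (hv0 j) hh.le, ht.1]
      · nlinarith [mul_lt_mul_of_pos_right (hv1 j) hh]
    · refine ⟨-(δ - γ), by rw [abs_neg, abs_of_pos hh], fun j => ⟨?_, ?_⟩⟩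
      · nlinarith [mul_lt_mul_of_pos_right (hv1 j) hh]
      · nlinarith [mul_nonneg (hv0 j) hh.le, ht.2]
  have hM0 : 0 ≤ M := (norm_nonneg _).trans (hM t ht)
  -- The values of the Taylor polynomial at the nodes.
  set T : Fin (n + 1) → ℂ := fun j =>
    ∑ k ∈ Finset.range (n + 1), ((v j * h') ^ k / (k.factorial : ℝ)) • F k t with hT
  have hTb : ∀ j, ‖T j‖ ≤ M + L * (δ - γ) ^ (n + 1) := by
    intro j
    have hsub : uIcc t (t + v j * h') ⊆ Ioo γ δ := by
      have : OrdConnected (Ioo γ δ) := ordConnected_Ioo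
      exact this.uIcc_subset ht (hmem j)
    have h1 := norm_sub_taylor_sum_le n F t (t + v j * h') L
      (fun k hk y hy => (hF k hk y (hsub hy)).mono hsub)
      (fun y hy => hL y (hsub hy) t ht)
    rw [add_sub_cancel_left] at h1
    have h2 : |v j * h'| ≤ δ - γ := by
      rw [abs_mul, hh', abs_of_nonneg (hv0 j)]
      nlinarith [hv1 j]
    have h3 : L * |v j * h'| ^ (n + 1) ≤ L * (δ - γ) ^ (n + 1) := by gcongr
    have h4 : T j = F 0 (t + v j * h') - (F 0 (t + v j * h') - T j) := by ring
    rw [h4]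
    exact (norm_sub_le _ _).trans (add_le_add (hM _ (hmem j)) (h1.trans h3))
  set s' : Fin (n + 1) := ⟨s, by omega⟩ with hs'
  have hsum : ∑ j, W s' j • T j = (h' ^ s / (s.factorial : ℝ)) • F s t := by
    simp only [hT, Finset.smul_sum]
    rw [Finset.sum_comm, Finset.sum_range]
    have : ∀ k : Fin (n + 1), ∑ j, W s' j • ((v j * h') ^ (k : ℕ) / ((k : ℕ).factorial : ℝ)) • F k t
        = if s' = k then (h' ^ (k : ℕ) / ((k : ℕ).factorial : ℝ)) • F k t else 0 := by
      intro k
      have h5 : ∀ j, W s' j • ((v j * h') ^ (k : ℕ) / ((k : ℕ).factorial : ℝ)) • F k t =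
          (W s' j * v j ^ (k : ℕ)) • ((h' ^ (k : ℕ) / ((k : ℕ).factorial : ℝ)) • F k t) := by
        intro j
        rw [smul_smul, smul_smul, mul_pow]
        congr 1
        ring
      simp only [h5]
      rw [← Finset.sum_smul, hWv]
      split_ifs <;> simp
    rw [Finset.sum_congr rfl fun k _ => this k, Finset.sum_ite_eq]
    simp [hs']
  have hfac : (0 : ℝ) < s.factorial := by exact_mod_cast s.factorial_pos
  have hn1 : ‖(h' ^ s / (s.factorial : ℝ)) • F s t‖ = (‖F s t‖ * (δ - γ) ^ s) / s.factorial := by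
    rw [norm_smul, Real.norm_eq_abs, abs_div, abs_pow, hh', abs_of_pos hfac]
    ring
  have hB : 0 ≤ M + L * (δ - γ) ^ (n + 1) := by positivity
  have hn2 : ‖∑ j, W s' j • T j‖ ≤ (∑ s, ∑ j, |W s j|) * (M + L * (δ - γ) ^ (n + 1)) := by
    calc ‖∑ j, W s' j • T j‖ ≤ ∑ j, ‖W s' j • T j‖ := norm_sum_le _ _
      _ ≤ ∑ j, |W s' j| * (M + L * (δ - γ) ^ (n + 1)) := by
          refine Finset.sum_le_sum fun j _ => ?_
          rw [norm_smul, Real.norm_eq_abs]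
          exact mul_le_mul_of_nonneg_left (hTb j) (abs_nonneg _)
      _ = (∑ j, |W s' j|) * (M + L * (δ - γ) ^ (n + 1)) := by rw [Finset.sum_mul]
      _ ≤ _ := by
          refine mul_le_mul_of_nonneg_right ?_ hB
          exact Finset.single_le_sum (f := fun s => ∑ j, |W s j|)
            (fun i _ => Finset.sum_nonneg fun j _ => abs_nonneg _) (Finset.mem_univ s')
  rw [hsum, hn1, div_le_iff₀ hfac] at hn2
  have hle : (s.factorial : ℝ) ≤ n.factorial := by exact_mod_cast Nat.factorial_le hs
  have h0 : 0 ≤ (∑ s, ∑ j, |W s j|) * (M + L * (δ - γ) ^ (n + 1)) := by positivity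
  nlinarith [mul_le_mul_of_nonneg_left hle h0]

/-! ### Absolutely continuous functions and variation -/

/-- `AbsolutelyContinuousOn` tests families of closed intervals with disjoint interiors, Mathlib's
notion families of unordered endpoint pairs with disjoint `uIoc`; the former applies to the latter
after sorting the endpoints. -/
lemma AbsolutelyContinuousOn.absolutelyContinuousOnInterval {E : Type*} [NormedAddCommGroup E]
    {f : ℝ → E} {s : Set ℝ} (hf : AbsolutelyContinuousOn f s) {x y : ℝ} (hxy : uIcc x y ⊆ s) :
    AbsolutelyContinuousOnInterval f x y := by
  rw [absolutelyContinuousOnInterval_iff]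
  intro ε hε
  obtain ⟨η, hη, h⟩ := hf ε hε
  refine ⟨η, hη, ?_⟩
  rintro ⟨m, P⟩ ⟨hP1, hP2⟩ hlen
  simp only [Finset.mem_range] at hP1 hP2 hlen ⊢
  have key := h m (fun i => min (P i).1 (P i).2) (fun i => max (P i).1 (P i).2)
    (fun i => min_le_max)
    (fun i => (uIcc_subset_uIcc (hP1 i i.2).1 (hP1 i i.2).2).trans hxy) ?_ ?_
  · rw [Finset.sum_range]
    convert! key using 2 with i
    rcases le_total (P i).1 (P i).2 with h' | h'
    · simp [h', dist_eq_norm, norm_sub_rev]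
    · simp [h', dist_eq_norm]
  · intro i j hij
    have hd := hP2 (by simp) (by simp) (fun h => hij (Fin.ext h) : (i : ℕ) ≠ j)
    have hd' : Disjoint (uIoc (P i).1 (P i).2) (uIoc (P j).1 (P j).2) := hd
    exact disjoint_iff_inter_eq_empty.1 (hd'.mono Ioo_subset_Ioc_self Ioo_subset_Ioc_self)
  · rw [Finset.sum_range] at hlen
    convert! hlen using 2 with i
    rw [Real.dist_eq, max_sub_min_eq_abs, abs_sub_comm]

/-- Mathlib's fundamental theorem of calculus for absolutely continuous functions is real-valued;
it is applied to `Re (c f)` for a suitable scalar `c`. -/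
lemma norm_sub_le_integral_norm_deriv {f : ℝ → ℂ} {x y : ℝ} (hxy : x ≤ y)
    (hf : AbsolutelyContinuousOnInterval f x y)
    (hint : IntervalIntegrable (deriv f) volume x y) :
    ‖f y - f x‖ ≤ ∫ t in x..y, ‖deriv f t‖ := by
  -- Multiplication by a scalar `c` of norm at most `1` turns the increment into its norm.
  obtain ⟨c, hc, hcn⟩ : ∃ c : ℂ, ‖c‖ ≤ 1 ∧ (c * (f y - f x)).re = ‖f y - f x‖ := by
    rcases eq_or_ne (f y - f x) 0 with h0 | h0
    · exact ⟨0, by simp, by simp [h0]⟩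
    · have hn : (‖f y - f x‖ : ℂ) ≠ 0 := by exact_mod_cast norm_ne_zero_iff.2 h0
      refine ⟨(starRingEnd ℂ) (f y - f x) / ‖f y - f x‖, ?_, ?_⟩
      · rw [norm_div, RCLike.norm_conj, Complex.norm_real, norm_norm,
          div_self (norm_ne_zero_iff.2 h0)]
      · rw [div_mul_eq_mul_div, mul_comm, Complex.mul_conj, Complex.normSq_eq_norm_sq]
        push_cast
        rw [pow_two, mul_div_assoc, div_self hn, mul_one, Complex.ofReal_re]
  set g : ℝ → ℝ := fun t => (c * f t).re with hg
  have hgac : AbsolutelyContinuousOnInterval g x y := by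
    have h1 := hf.const_smul c
    refine squeeze_zero (fun E => Finset.sum_nonneg fun _ _ => dist_nonneg) (fun E => ?_) h1
    refine Finset.sum_le_sum fun i _ => ?_
    rw [Real.dist_eq, dist_eq_norm, hg]
    simp only [smul_eq_mul]
    rw [← Complex.sub_re]
    exact Complex.abs_re_le_norm _
  have hae : ∀ᵐ t, t ∈ uIcc x y → DifferentiableAt ℝ f t :=
    hf.boundedVariationOn.ae_differentiableAt_of_mem_uIcc
  have hftc := hgac.integral_deriv_eq_sub
  have hgsub : g y - g x = ‖f y - f x‖ := by
    rw [← hcn, hg]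
    simp only
    rw [← Complex.sub_re, mul_sub]
  rw [← hgsub, ← hftc]
  refine intervalIntegral.integral_mono_ae_restrict hxy hgac.intervalIntegrable_deriv hint.norm ?_
  rw [Filter.EventuallyLE, ae_restrict_iff' measurableSet_Icc]
  filter_upwards [hae] with t ht htm
  rw [uIcc_of_le hxy] at ht
  have h2 : HasDerivAt g (c * deriv f t).re t :=
    (Complex.reCLM.hasFDerivAt.comp_hasDerivAt t ((ht htm).hasDerivAt.const_mul c))
  rw [h2.deriv]
  calc (c * deriv f t).re ≤ ‖c * deriv f t‖ := Complex.re_le_norm _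
    _ = ‖c‖ * ‖deriv f t‖ := norm_mul _ _
    _ ≤ ‖deriv f t‖ := mul_le_of_le_one_left (norm_nonneg _) hc

lemma eVariationOn_le_of_dist_le {E : Type*} [PseudoMetricSpace E] {f : ℝ → E} {g : ℝ → ℝ}
    {s : Set ℝ} {M : ℝ} (h : ∀ x ∈ s, ∀ y ∈ s, x ≤ y → dist (f x) (f y) ≤ g y - g x)
    (hM : ∀ x ∈ s, ∀ y ∈ s, x ≤ y → g y - g x ≤ M) :
    eVariationOn f s ≤ ENNReal.ofReal M := by
  refine iSup_le ?_
  rintro ⟨n, u, hu, hus⟩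
  simp only
  calc ∑ i ∈ Finset.range n, edist (f (u (i + 1))) (f (u i))
      ≤ ∑ i ∈ Finset.range n, ENNReal.ofReal (g (u (i + 1)) - g (u i)) := by
        refine Finset.sum_le_sum fun i _ => ?_
        rw [edist_dist, dist_comm]
        exact ENNReal.ofReal_le_ofReal (h _ (hus i) _ (hus _) (hu (Nat.le_succ i)))
    _ = ENNReal.ofReal (∑ i ∈ Finset.range n, (g (u (i + 1)) - g (u i))) := by
        rw [ENNReal.ofReal_sum_of_nonneg]
        exact fun i _ => dist_nonneg.trans (h _ (hus i) _ (hus _) (hu (Nat.le_succ i)))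
    _ = ENNReal.ofReal (g (u n) - g (u 0)) := by rw [Finset.sum_range_sub (fun i => g (u i))]
    _ ≤ ENNReal.ofReal M :=
        ENNReal.ofReal_le_ofReal (hM _ (hus 0) _ (hus n) (hu (Nat.zero_le n)))

/-! ### Powers and Lipschitz constants -/

lemma norm_pow_sub_pow_le {u v : ℂ} {R : ℝ} (hu : ‖u‖ ≤ R) (hv : ‖v‖ ≤ R) (e : ℕ) :
    ‖u ^ e - v ^ e‖ ≤ e * R ^ (e - 1) * ‖u - v‖ := by
  have hR : 0 ≤ R := (norm_nonneg _).trans hu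
  rw [← Commute.mul_geom_sum₂ (Commute.all u v), norm_mul, mul_comm]
  refine mul_le_mul_of_nonneg_right ?_ (norm_nonneg _)
  calc ‖∑ i ∈ Finset.range e, u ^ i * v ^ (e - 1 - i)‖
      ≤ ∑ i ∈ Finset.range e, ‖u ^ i * v ^ (e - 1 - i)‖ := norm_sum_le _ _
    _ ≤ ∑ _i ∈ Finset.range e, R ^ (e - 1) := by
        refine Finset.sum_le_sum fun i hi => ?_
        have hi' := Finset.mem_range.1 hi
        rw [norm_mul, norm_pow, norm_pow]
        calc ‖u‖ ^ i * ‖v‖ ^ (e - 1 - i) ≤ R ^ i * R ^ (e - 1 - i) := by gcongr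
          _ = R ^ (e - 1) := by rw [← pow_add]; congr 1; omega
    _ = e * R ^ (e - 1) := by simp

/-- The infimum defining `lipConstOn` is attained as soon as some Lipschitz constant exists. -/
lemma norm_sub_le_lipConstOn_mul {f : ℝ → ℂ} {s : Set ℝ}
    (hf : ∃ C : ℝ, 0 ≤ C ∧ ∀ x ∈ s, ∀ y ∈ s, ‖f x - f y‖ ≤ C * |x - y|) {x y : ℝ}
    (hx : x ∈ s) (hy : y ∈ s) : ‖f x - f y‖ ≤ lipConstOn f s * |x - y| := by
  rcases eq_or_ne x y with rfl | hne
  · simp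
  have hpos : 0 < |x - y| := abs_pos.2 (sub_ne_zero.2 hne)
  rw [← div_le_iff₀ hpos]
  refine le_csInf hf ?_
  rintro C ⟨_, hC⟩
  exact (div_le_iff₀ hpos).2 (hC x hx y hy)

lemma lipConstOn_le {f : ℝ → ℂ} {s : Set ℝ} {C : ℝ} (hC : 0 ≤ C)
    (h : ∀ x ∈ s, ∀ y ∈ s, ‖f x - f y‖ ≤ C * |x - y|) : lipConstOn f s ≤ C :=
  csInf_le ⟨0, fun _ h => h.1⟩ ⟨hC, h⟩

/-! ### Estimates on the subinterval -/

/-- **Estimates on a special subinterval `J` (reduction step).**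
Given `b_i ∈ C^{d-1,1}(Ī)` with continuous selections `b̂_i` of `b_i^{1/e_i}`
(`e_i ≤ d`, `e = max e_i`) satisfying the scaled derivative bounds with constant `C₀`
and `|b̂_i| ≤ C₁ A` on `I`, and given `t₁ ∈ I`, `ℓ` maximal at `t₁`, `0 < D < 1/3`, and
an open interval `J = (γ,δ)` with `t₁ ∈ J ⊆ I` such that
`|J||I|^{-1} A + Σ_i ‖b̂_i′‖_{L^1(J)} = D |b̂_ℓ(t₁)|`, one has on `J`:
(i)–(iii) the pointwise comparison estimates,
(iv) the length of the reduced curve `((b̂_ℓ⁻¹ b̂_1)^{e_1}, …, (b̂_ℓ⁻¹ b̂_m)^{e_m})` on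
`J` is at most `3 e² 2^e D`, and
(v) `‖b_i^{(s)}‖_{L^∞(J)} ≤ C |J|^{-s} |b̂_ℓ(t₁)|^{e_i}` for `s = 1,…,d-1` and
`Lip_J(b_i^{(d-1)}) ≤ C |J|^{-d} |b̂_ℓ(t₁)|^{e_i}`, where `C = C(d, C₀, C₁)`. -/
theorem subinterval_estimates
    (d : ℕ) (hd : 1 ≤ d) (C₀ C₁ : ℝ) (hC₀ : 0 ≤ C₀) (hC₁ : 0 ≤ C₁) :
    ∃ C : ℝ, 0 < C ∧
      ∀ (m : ℕ) (ee : Fin m → ℕ), (∀ i, 1 ≤ ee i ∧ ee i ≤ d) →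
      ∀ eM : ℕ, eM = Finset.univ.sup ee →
      ∀ α β : ℝ, α < β → ∀ A : ℝ, 0 < A →
      ∀ b : Fin m → ℝ → ℂ,
        (∀ i, CkLipOn (d - 1) (b i) (Set.Icc α β)) →
      ∀ bhat : Fin m → ℝ → ℂ,
        (∀ i, ∀ t ∈ Set.Ioo α β, bhat i t ^ ee i = b i t) →
        (∀ i, ContinuousOn (bhat i) (Set.Ioo α β)) →
        (∀ i, AbsolutelyContinuousOn (bhat i) (Set.Ioo α β)) →
        (∀ i, IntegrableOn (deriv (bhat i)) (Set.Ioo α β)) →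
        (∀ i, ∀ s : ℕ, 1 ≤ s → s ≤ d - 1 → ∀ t ∈ Set.Icc α β,
          ‖iteratedDerivWithin s (b i) (Set.Icc α β) t‖ ≤
            C₀ * (β - α) ^ (-(s : ℝ)) * A ^ ee i) →
        (∀ i, lipConstOn (iteratedDerivWithin (d - 1) (b i) (Set.Icc α β)) (Set.Icc α β) ≤
          C₀ * (β - α) ^ (-(d : ℝ)) * A ^ ee i) →
        (∀ i, ∀ t ∈ Set.Ioo α β, ‖bhat i t‖ ≤ C₁ * A) →
      ∀ t₁ ∈ Set.Ioo α β, ∀ ℓ : Fin m,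
        (∀ i, ‖bhat i t₁‖ ≤ ‖bhat ℓ t₁‖) → bhat ℓ t₁ ≠ 0 →
      ∀ D : ℝ, 0 < D → D < 1 / 3 →
      ∀ γ δ : ℝ, t₁ ∈ Set.Ioo γ δ → Set.Ioo γ δ ⊆ Set.Ioo α β →
        ((δ - γ) * (β - α)⁻¹ * A + ∑ i, ∫ t in Set.Ioo γ δ, ‖deriv (bhat i) t‖) =
          D * ‖bhat ℓ t₁‖ →
        (∀ t ∈ Set.Ioo γ δ, ∀ i,
          ‖bhat i t - bhat i t₁‖ ≤ D * ‖bhat ℓ t₁‖ ∧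
          (1 - D ≤ ‖bhat ℓ t‖ / ‖bhat ℓ t₁‖ ∧ ‖bhat ℓ t‖ / ‖bhat ℓ t₁‖ ≤ 1 + D) ∧
          (‖bhat i t‖ ≤ 4 / 3 * ‖bhat ℓ t₁‖ ∧ 4 / 3 * ‖bhat ℓ t₁‖ ≤ 2 * ‖bhat ℓ t‖)) ∧
        eVariationOn (fun t => fun i => ((bhat ℓ t)⁻¹ * bhat i t) ^ ee i) (Set.Ioo γ δ) ≤
          ENNReal.ofReal (3 * (eM : ℝ) ^ 2 * 2 ^ eM * D) ∧
        (∀ i, ∀ s : ℕ, 1 ≤ s → s ≤ d - 1 → ∀ t ∈ Set.Ioo γ δ,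
          ‖iteratedDerivWithin s (b i) (Set.Icc α β) t‖ ≤
            C * (δ - γ) ^ (-(s : ℝ)) * ‖bhat ℓ t₁‖ ^ ee i) ∧
        (∀ i, lipConstOn (iteratedDerivWithin (d - 1) (b i) (Set.Icc α β)) (Set.Ioo γ δ) ≤
          C * (δ - γ) ^ (-(d : ℝ)) * ‖bhat ℓ t₁‖ ^ ee i) := by
  obtain ⟨K, hK0, hK⟩ := exists_interpolation_const (d - 1)
  refine ⟨K * ((4 / 3) ^ d + C₀) + C₀ + 1, by positivity, ?_⟩
  intro m ee hee eM heM α β hαβ A hA b hb bhat hroot _ hac hint hder hlip _ t₁ ht₁I ℓ hmax hne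
    D hD hD3 γ δ ht₁ hJI hsum
  have hγδ : γ < δ := ht₁.1.trans ht₁.2
  obtain ⟨hαγ, hδβ⟩ := (Ioo_subset_Ioo_iff hγδ).1 hJI
  set B := ‖bhat ℓ t₁‖ with hBdef
  have hB : 0 < B := norm_pos_iff.2 hne
  have hh : 0 < δ - γ := sub_pos.2 hγδ
  have hI : 0 < β - α := sub_pos.2 hαβ
  have hP0 : 0 ≤ (δ - γ) * (β - α)⁻¹ * A := by positivity
  have hint' : ∀ i, IntegrableOn (deriv (bhat i)) (Ioo γ δ) := fun i => (hint i).mono_set hJI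
  have hInn : ∀ i, 0 ≤ ∫ t in Ioo γ δ, ‖deriv (bhat i) t‖ :=
    fun i => integral_nonneg fun _ => norm_nonneg _
  have hS : ∑ i, ∫ t in Ioo γ δ, ‖deriv (bhat i) t‖ ≤ D * B := by linarith
  have hP : (δ - γ) * (β - α)⁻¹ * A ≤ D * B := by
    have := Finset.sum_nonneg fun i (_ : i ∈ Finset.univ) => hInn i
    linarith
  have huIcc : ∀ x ∈ Ioo γ δ, ∀ y ∈ Ioo γ δ, uIcc x y ⊆ Ioo γ δ := fun x hx y hy =>
    (ordConnected_Ioo (a := γ) (b := δ)).uIcc_subset hx hy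
  have hii : ∀ i, ∀ x ∈ Ioo γ δ, ∀ y ∈ Ioo γ δ,
      IntervalIntegrable (deriv (bhat i)) volume x y := fun i x hx y hy =>
    ((hint' i).mono_set (huIcc x hx y hy)).intervalIntegrable
  have hinc : ∀ i, ∀ x ∈ Ioo γ δ, ∀ y ∈ Ioo γ δ, x ≤ y →
      ‖bhat i y - bhat i x‖ ≤ ∫ t in x..y, ‖deriv (bhat i) t‖ := fun i x hx y hy hxy =>
    norm_sub_le_integral_norm_deriv hxy
      ((hac i).absolutelyContinuousOnInterval ((huIcc x hx y hy).trans hJI)) (hii i x hx y hy)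
  have hJint : ∀ i, ∀ x ∈ Ioo γ δ, ∀ y ∈ Ioo γ δ, x ≤ y →
      ∫ t in x..y, ‖deriv (bhat i) t‖ ≤ ∫ t in Ioo γ δ, ‖deriv (bhat i) t‖ := by
    intro i x hx y hy hxy
    rw [intervalIntegral.integral_of_le hxy]
    refine setIntegral_mono_set (hint' i).norm
      (Filter.Eventually.of_forall fun _ => norm_nonneg _) (LE.le.eventuallyLE ?_)
    exact fun z hz => ⟨hx.1.trans hz.1, hz.2.trans_lt hy.2⟩
  have h1 : ∀ t ∈ Ioo γ δ, ∀ i, ‖bhat i t - bhat i t₁‖ ≤ D * B := by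
    intro t ht i
    have hle : ∫ t in Ioo γ δ, ‖deriv (bhat i) t‖ ≤ D * B :=
      (Finset.single_le_sum (f := fun i => ∫ t in Ioo γ δ, ‖deriv (bhat i) t‖)
        (fun i _ => hInn i) (Finset.mem_univ i)).trans hS
    rcases le_total t t₁ with h | h
    · rw [norm_sub_rev]
      exact (hinc i t ht t₁ ht₁ h).trans ((hJint i t ht t₁ ht₁ h).trans hle)
    · exact (hinc i t₁ ht₁ t ht h).trans ((hJint i t₁ ht₁ t ht h).trans hle)
  have hDB : D * B ≤ 1 / 3 * B := by gcongr
  have hlow : ∀ t ∈ Ioo γ δ, (1 - D) * B ≤ ‖bhat ℓ t‖ := by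
    intro t ht
    have := norm_sub_norm_le (bhat ℓ t₁) (bhat ℓ t)
    rw [norm_sub_rev] at this
    linarith [h1 t ht ℓ]
  have hup : ∀ t ∈ Ioo γ δ, ∀ i, ‖bhat i t‖ ≤ B + D * B := by
    intro t ht i
    linarith [norm_sub_norm_le (bhat i t) (bhat i t₁), h1 t ht i, hmax i]
  have hlow' : ∀ t ∈ Ioo γ δ, 2 / 3 * B ≤ ‖bhat ℓ t‖ := fun t ht => by linarith [hlow t ht]
  have hup' : ∀ t ∈ Ioo γ δ, ∀ i, ‖bhat i t‖ ≤ 4 / 3 * B := fun t ht i => by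
    linarith [hup t ht i]
  -- `A ^ k |I| ^ (-d) ≤ B ^ k |J| ^ (-d)` for `k ≤ d`, since `|J| ≤ |I|` and `|J| |I|⁻¹ A ≤ B`.
  have hscale : ∀ k ≤ d, (β - α) ^ (-(d : ℝ)) * A ^ k ≤ (δ - γ) ^ (-(d : ℝ)) * B ^ k := by
    intro k hk
    rw [Real.rpow_neg hI.le, Real.rpow_neg hh.le, Real.rpow_natCast, Real.rpow_natCast]
    set q := (δ - γ) * (β - α)⁻¹ with hq
    have hq0 : 0 ≤ q := by positivity
    have hq1 : q ≤ 1 := by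
      rw [hq, ← div_eq_mul_inv, div_le_one hI]
      linarith
    have hqA : q ^ d * A ^ k ≤ B ^ k := by
      calc q ^ d * A ^ k ≤ q ^ k * A ^ k := by
            gcongr ?_ * _
            exact pow_le_pow_of_le_one hq0 hq1 hk
        _ = (q * A) ^ k := (mul_pow _ _ _).symm
        _ ≤ B ^ k := by
            gcongr
            linarith
    have heq : ((β - α) ^ d)⁻¹ = ((δ - γ) ^ d)⁻¹ * q ^ d := by
      rw [hq, mul_pow, inv_pow]
      field_simp
    rw [heq, mul_assoc]
    gcongr
  have hLip : ∀ i, ∀ x ∈ Ioo γ δ, ∀ y ∈ Ioo γ δ,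
      ‖iteratedDerivWithin (d - 1) (b i) (Icc α β) x -
        iteratedDerivWithin (d - 1) (b i) (Icc α β) y‖ ≤
      (C₀ * (δ - γ) ^ (-(d : ℝ)) * B ^ ee i) * |x - y| := by
    intro i x hx y hy
    refine (norm_sub_le_lipConstOn_mul (hb i).2 (Ioo_subset_Icc_self (hJI hx))
      (Ioo_subset_Icc_self (hJI hy))).trans ?_
    refine mul_le_mul_of_nonneg_right ((hlip i).trans ?_) (abs_nonneg _)
    rw [mul_assoc, mul_assoc]
    exact mul_le_mul_of_nonneg_left (hscale _ (hee i).2) hC₀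
  have hL0 : ∀ i, 0 ≤ C₀ * (δ - γ) ^ (-(d : ℝ)) * B ^ ee i := fun i => by positivity
  refine ⟨fun t ht i => ⟨h1 t ht i, ⟨?_, ?_⟩, hup' t ht i, ?_⟩, ?_, ?_, ?_⟩
  · rw [le_div_iff₀ hB]
    exact hlow t ht
  · rw [div_le_iff₀ hB]
    linarith [hup t ht ℓ]
  · linarith [hlow' t ht]
  · set Φ : ℝ → ℝ := fun x => ∑ i, ∫ t in t₁..x, ‖deriv (bhat i) t‖ with hΦ
    have hΦsub : ∀ x ∈ Ioo γ δ, ∀ y ∈ Ioo γ δ,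
        Φ y - Φ x = ∑ i, ∫ t in x..y, ‖deriv (bhat i) t‖ := by
      intro x hx y hy
      rw [hΦ]
      simp only
      rw [← Finset.sum_sub_distrib]
      refine Finset.sum_congr rfl fun i _ => ?_
      exact intervalIntegral.integral_interval_sub_left (hii i t₁ ht₁ y hy).norm
        (hii i t₁ ht₁ x hx).norm
    have hincΦ : ∀ i, ∀ x ∈ Ioo γ δ, ∀ y ∈ Ioo γ δ, x ≤ y →
        ‖bhat i y - bhat i x‖ ≤ Φ y - Φ x := by
      intro i x hx y hy hxy
      rw [hΦsub x hx y hy]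
      refine (hinc i x hx y hy hxy).trans ?_
      exact Finset.single_le_sum (f := fun i => ∫ t in x..y, ‖deriv (bhat i) t‖)
        (fun i _ => intervalIntegral.integral_nonneg hxy fun _ _ => norm_nonneg _)
        (Finset.mem_univ i)
    have hΦM : ∀ x ∈ Ioo γ δ, ∀ y ∈ Ioo γ δ, x ≤ y → Φ y - Φ x ≤ D * B := by
      intro x hx y hy hxy
      rw [hΦsub x hx y hy]
      exact (Finset.sum_le_sum fun i _ => hJint i x hx y hy hxy).trans hS
    have heeM : ∀ i, ee i ≤ eM := fun i => heM ▸ Finset.le_sup (Finset.mem_univ i)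
    have heM1 : 1 ≤ eM := (hee ℓ).1.trans (heeM ℓ)
    -- `‖(b̂_ℓ x)⁻¹‖ ≤ (3/2) / B`, and the numerator of the difference of two quotients is at most
    -- `3 (Φ y - Φ x)`, whence the factor `9 / 2 / B`.
    set Q : ℝ := eM * 2 ^ (eM - 1) * (9 / 2 / B) with hQ
    have hQ0 : 0 ≤ Q := by positivity
    have hvar : eVariationOn (fun t => fun i => ((bhat ℓ t)⁻¹ * bhat i t) ^ ee i) (Ioo γ δ) ≤
        ENNReal.ofReal (Q * (D * B)) := by
      refine eVariationOn_le_of_dist_le (g := fun x => Q * Φ x) ?_ ?_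
      · intro x hx y hy hxy
        have hΦ0 : 0 ≤ Φ y - Φ x := (norm_nonneg _).trans (hincΦ ℓ x hx y hy hxy)
        rw [← mul_sub]
        refine (dist_pi_le_iff (by positivity)).2 fun i => ?_
        have hnz : ∀ t ∈ Ioo γ δ, bhat ℓ t ≠ 0 := fun t ht =>
          norm_pos_iff.1 (by linarith [hlow' t ht])
        have hu : ∀ t ∈ Ioo γ δ, ‖(bhat ℓ t)⁻¹ * bhat i t‖ ≤ 2 := by
          intro t ht
          rw [norm_mul, norm_inv, inv_mul_le_iff₀ (norm_pos_iff.2 (hnz t ht))]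
          linarith [hlow' t ht, hup' t ht i]
        have hinv : ‖(bhat ℓ x)⁻¹‖ ≤ 3 / 2 / B := by
          rw [norm_inv, inv_le_comm₀ (norm_pos_iff.2 (hnz x hx)) (by positivity), inv_div]
          linarith [hlow' x hx, show B / (3 / 2) = 2 / 3 * B by ring]
        have hdiff : ‖(bhat ℓ x)⁻¹ * bhat i x - (bhat ℓ y)⁻¹ * bhat i y‖ ≤
            9 / 2 / B * (Φ y - Φ x) := by
          have heq : (bhat ℓ x)⁻¹ * bhat i x - (bhat ℓ y)⁻¹ * bhat i y =
              (bhat ℓ x)⁻¹ * ((bhat ℓ y - bhat ℓ x) * ((bhat ℓ y)⁻¹ * bhat i y) -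
                (bhat i y - bhat i x)) := by
            have := hnz x hx
            have := hnz y hy
            field_simp
            ring
          rw [heq, norm_mul]
          have h2 : ‖(bhat ℓ y - bhat ℓ x) * ((bhat ℓ y)⁻¹ * bhat i y)‖ ≤ (Φ y - Φ x) * 2 := by
            rw [norm_mul]
            exact mul_le_mul (hincΦ ℓ x hx y hy hxy) (hu y hy) (norm_nonneg _) hΦ0
          calc _ ≤ 3 / 2 / B * ((Φ y - Φ x) * 2 + (Φ y - Φ x)) := by
                refine mul_le_mul hinv ?_ (norm_nonneg _) (by positivity)
                exact (norm_sub_le _ _).trans (add_le_add h2 (hincΦ i x hx y hy hxy))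
            _ = 9 / 2 / B * (Φ y - Φ x) := by ring
        rw [dist_eq_norm]
        refine (norm_pow_sub_pow_le (hu x hx) (hu y hy) (ee i)).trans ?_
        rw [hQ, mul_assoc _ (9 / 2 / B)]
        have he : (ee i : ℝ) ≤ eM := by exact_mod_cast heeM i
        have hpow : (2 : ℝ) ^ (ee i - 1) ≤ 2 ^ (eM - 1) :=
          pow_le_pow_right₀ (by norm_num) (Nat.sub_le_sub_right (heeM i) 1)
        gcongr
      · intro x hx y hy hxy
        rw [← mul_sub]
        exact mul_le_mul_of_nonneg_left (hΦM x hx y hy hxy) hQ0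
    refine hvar.trans (ENNReal.ofReal_le_ofReal ?_)
    have hQB : Q * (D * B) = 9 / 2 * (eM * 2 ^ (eM - 1) * D) := by
      rw [hQ]
      field_simp
    have h2 : (2 : ℝ) ^ eM = 2 * 2 ^ (eM - 1) := by
      rw [← pow_succ']
      congr 1
      omega
    rw [hQB, h2]
    have he1 : (1 : ℝ) ≤ eM := by exact_mod_cast heM1
    have hX : 0 ≤ (eM : ℝ) * 2 ^ (eM - 1) * D := by positivity
    nlinarith [mul_le_mul_of_nonneg_right he1 hX]
  · intro i s _ hs t ht
    have hUD := uniqueDiffOn_Icc hαβ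
    have h2 := hK (fun k => iteratedDerivWithin k (b i) (Icc α β)) γ δ ((4 / 3 * B) ^ ee i)
      (C₀ * (δ - γ) ^ (-(d : ℝ)) * B ^ ee i) ?_ (hLip i) ?_ (hL0 i) s hs t ht
    · rw [Nat.sub_add_cancel hd, Real.rpow_neg hh.le, Real.rpow_natCast] at h2
      have hhd : 0 < (δ - γ) ^ d := by positivity
      have h3 : C₀ * ((δ - γ) ^ d)⁻¹ * B ^ ee i * (δ - γ) ^ d = C₀ * B ^ ee i := by
        field_simp
      have h4 : (4 / 3 * B) ^ ee i ≤ (4 / 3) ^ d * B ^ ee i := by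
        rw [mul_pow]
        gcongr
        · norm_num
        · exact (hee i).2
      rw [h3] at h2
      rw [Real.rpow_neg hh.le, Real.rpow_natCast, mul_right_comm, ← div_eq_mul_inv,
        le_div_iff₀ (by positivity)]
      have hBe : 0 ≤ B ^ ee i := by positivity
      calc _ ≤ K * ((4 / 3 * B) ^ ee i + C₀ * B ^ ee i) := h2
        _ ≤ K * ((4 / 3) ^ d * B ^ ee i + C₀ * B ^ ee i) := by gcongr
        _ ≤ _ := by nlinarith [mul_nonneg hC₀ hBe]
    · intro k hk y hy
      have hdiff := (hb i).1.differentiableOn_iteratedDerivWithin (m := k)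
        (by exact_mod_cast hk) hUD
      have hyI := Ioo_subset_Icc_self (hJI hy)
      have := (hdiff y hyI).hasDerivWithinAt
      rw [← iteratedDerivWithin_succ] at this
      exact this.mono (hJI.trans Ioo_subset_Icc_self)
    · intro y hy
      simp only [iteratedDerivWithin_zero]
      rw [← hroot i y (hJI hy), norm_pow]
      have := hup' y hy i
      gcongr
  · intro i
    refine (lipConstOn_le (hL0 i) (hLip i)).trans ?_
    have : 0 ≤ (δ - γ) ^ (-(d : ℝ)) * B ^ ee i := by positivity
    have h5 : C₀ ≤ K * ((4 / 3) ^ d + C₀) + C₀ + 1 := by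
      have : 0 ≤ K * ((4 / 3) ^ d + C₀) := by positivity
      linarith
    gcongr
end
end
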